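/- arXiv:1410.4118 — 3 statements merged into one kernel-verified Lean document; each statement's English description precedes it below -/
import Mathlib

section
/- Let W > 0 and let G be a graph with ω(G) ≤ W. Let (A, B) be a partition of V(G) such that: A is a stable set; every vertex in B has a neighbour in A; and there is a cograph H with vertex set A such that for every induced path P of G with both endpoints in A (distinct) and interior disjoint from A, the endpoints of P are adjacent in H if and only if P has odd length. Then there is a partition (X, Y) of B such that every clique of size W contained in B intersects both X and Y. -/
open SimpleGraph

universe u

variable {V : Type u}

/-- The independence (stability) number of a graph. -/
noncomputable def indepNum (G : SimpleGraph V) : ℕ :=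
  sSup {n | ∃ s : Finset V, s.card = n ∧ ∀ x ∈ s, ∀ y ∈ s, x ≠ y → ¬ G.Adj x y}

/-- A walk is induced: any edge of `G` between vertices of the walk is an edge of the walk. -/
def IsInducedWalk (G : SimpleGraph V) {u v : V} (p : G.Walk u v) : Prop :=
  ∀ x ∈ p.support, ∀ y ∈ p.support, G.Adj x y → p.toSubgraph.Adj x y

/-- An induced path. -/
def IsInducedPath (G : SimpleGraph V) {u v : V} (p : G.Walk u v) : Prop :=
  p.IsPath ∧ IsInducedWalk G p

/-- An odd hole: an induced cycle of odd length at least 5. -/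
def HasOddHole (G : SimpleGraph V) : Prop :=
  ∃ (v : V) (p : G.Walk v v), p.IsCycle ∧ IsInducedWalk G p ∧ Odd p.length ∧ 5 ≤ p.length

/-- A cograph: no induced path on four vertices. -/
def IsCograph (G : SimpleGraph V) : Prop :=
  ¬ ∃ a b c d : V, a ≠ c ∧ a ≠ d ∧ b ≠ d ∧
    G.Adj a b ∧ G.Adj b c ∧ G.Adj c d ∧ ¬ G.Adj a c ∧ ¬ G.Adj a d ∧ ¬ G.Adj b d

/-- A levelling `(L 0, …, L k)` in `G`. -/
def IsLevelling (G : SimpleGraph V) (k : ℕ) (L : ℕ → Set V) : Prop :=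
  (∀ i j, i ≤ k → j ≤ k → i ≠ j → Disjoint (L i) (L j)) ∧
  (∃ x, L 0 = {x}) ∧
  (∀ i, 1 ≤ i → i ≤ k → ∀ v ∈ L i,
     (∃ u ∈ L (i - 1), G.Adj u v) ∧ (∀ h, h + 1 < i → ∀ u ∈ L h, ¬ G.Adj u v))

/-- The interior (internal vertices) of a walk is contained in `S`. -/
def InteriorIn (G : SimpleGraph V) {u v : V} (p : G.Walk u v) (S : Set V) : Prop :=
  ∀ x ∈ p.support, x ≠ u → x ≠ v → x ∈ S

/-- The union `L 0 ∪ ⋯ ∪ L (k-1)`. -/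
def lowerLevels (L : ℕ → Set V) (k : ℕ) : Set V := ⋃ i ∈ Finset.range k, L i

/-- There is an odd induced path between `u` and `v` with interior in the lower levels. -/
def OddConn (G : SimpleGraph V) (L : ℕ → Set V) (k : ℕ) (u v : V) : Prop :=
  u ≠ v ∧ ∃ p : G.Walk u v, IsInducedPath G p ∧ Odd p.length ∧
    InteriorIn G p (lowerLevels L k)

/-- `w ∈ L (i+1)` is a dependent of `u ∈ L i`: `u` is its only parent. -/
def IsDependent (G : SimpleGraph V) (L : ℕ → Set V) (i : ℕ) (u w : V) : Prop :=
  w ∈ L (i + 1) ∧ G.Adj u w ∧ ∀ x ∈ L i, G.Adj x w → x = u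

open Classical in
/-- In a cograph, an anticomplete splitting of `S` one side of which contains a non-neighbour of `v`
yields an anticomplete splitting of `insert v S`. -/
theorem IsCograph.anticomplete_split_insert {H : SimpleGraph V} (hH : IsCograph H) {v : V}
    {S S₁ : Finset V} (hvS : v ∉ S) (hsub : S₁ ⊆ S) (hne : S₁ ≠ S)
    (hsplit : ∀ x ∈ S₁, ∀ y ∈ S, y ∉ S₁ → ¬ H.Adj x y)
    {z : V} (hz : z ∈ S₁) (hvz : ¬ H.Adj v z) :
    ∃ T ⊆ insert v S, T.Nonempty ∧ T ≠ insert v S ∧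
      ∀ x ∈ T, ∀ y ∈ insert v S, y ∉ T → ¬ H.Adj x y := by
  obtain ⟨K, hK, hmin⟩ := Finset.exists_min_image
    (S₁.powerset.filter fun K => z ∈ K ∧ ∀ x ∈ K, ∀ y ∈ S, y ∉ K → ¬ H.Adj x y) Finset.card
    ⟨S₁, by simp [hz]; exact hsplit⟩
  simp only [Finset.mem_filter, Finset.mem_powerset] at hK hmin
  obtain ⟨hKS₁, hzK, hKsplit⟩ := hK
  have hKS : K ⊆ S := hKS₁.trans hsub
  by_cases hy : ∃ y ∈ K, H.Adj v y
  · by_cases hx : ∃ x ∈ S, x ∉ K ∧ H.Adj v x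
    · obtain ⟨x, hxS, hxK, hvx⟩ := hx
      obtain ⟨y₀, hy₀K, hvy₀⟩ := hy
      exfalso
      by_cases hcross : ∃ y ∈ K, ∃ z' ∈ K, H.Adj v y ∧ ¬ H.Adj v z' ∧ H.Adj y z'
      · obtain ⟨y, hyK, z', hzK', hvy, hvz', hyz⟩ := hcross
        refine hH ⟨x, v, y, z', ?_, ?_, ?_, hvx.symm, hvy, hyz, ?_, ?_, hvz'⟩
        · rintro rfl; exact hxK hyK
        · rintro rfl; exact hxK hzK'
        · rintro rfl; exact hvS (hKS hzK')
        · exact fun h => hKsplit y hyK x hxS hxK h.symm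
        · exact fun h => hKsplit z' hzK' x hxS hxK h.symm
      · push Not at hcross
        have hle := hmin (K.filter fun t => ¬ H.Adj v t)
          ⟨(Finset.filter_subset _ _).trans hKS₁, by simp [hzK, hvz], by
            intro s hs y hyS hyn hadj
            simp only [Finset.mem_filter, not_and, not_not] at hs hyn
            by_cases hyK : y ∈ K
            · exact hcross y hyK s hs.1 (hyn hyK) hs.2 hadj.symm
            · exact hKsplit s hs.1 y hyS hyK hadj⟩
        have hlt : (K.filter fun t => ¬ H.Adj v t).card < K.card :=
          Finset.card_lt_card (Finset.filter_ssubset.2 ⟨y₀, hy₀K, by simpa using hvy₀⟩)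
        omega
    · push Not at hx
      refine ⟨insert v K, Finset.insert_subset_insert _ hKS, by simp, ?_, ?_⟩
      · intro h
        apply hne
        refine Finset.Subset.antisymm hsub fun s hs => ?_
        have : s ∈ insert v K := h ▸ Finset.mem_insert_of_mem hs
        rcases Finset.mem_insert.1 this with rfl | h'
        · exact absurd hs hvS
        · exact hKS₁ h'
      · intro s hs y hyS hyn
        simp only [Finset.mem_insert, not_or] at hs hyS hyn
        rcases hs with rfl | hs
        · exact hx y (hyS.resolve_left hyn.1) hyn.2
        · exact hKsplit s hs y (hyS.resolve_left hyn.1) hyn.2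
  · push Not at hy
    refine ⟨K, hKS.trans (Finset.subset_insert _ _), ⟨z, hzK⟩, ?_, ?_⟩
    · intro h
      exact hvS (hKS (h ▸ Finset.mem_insert_self v S))
    · intro s hs y hyS hyn hadj
      rcases Finset.mem_insert.1 hyS with rfl | hyS
      · exact hy s hs hadj.symm
      · exact hKsplit s hs y hyS hyn hadj

/-- The complement of a cograph is a cograph. -/
theorem IsCograph.compl {H : SimpleGraph V} (hH : IsCograph H) : IsCograph Hᶜ := by
  rintro ⟨a, b, c, d, hac, had, hbd, hab, hbc, hcd, hac', had', hbd'⟩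
  simp only [SimpleGraph.compl_adj, not_and, not_not] at hab hbc hcd hac' had' hbd'
  exact hH ⟨b, d, a, c, hab.1.symm, hbc.1, hcd.1.symm, hbd' hbd, (had' had).symm, hac' hac,
    fun h => hab.2 h.symm, hbc.2, fun h => hcd.2 h.symm⟩

open Classical in
/-- Any vertex subset of a cograph with at least two elements has a nontrivial splitting that is
either anticomplete or complete. -/
theorem IsCograph.exists_split {H : SimpleGraph V} (hH : IsCograph H) (S : Finset V)
    (hS : 2 ≤ S.card) :
    ∃ T ⊆ S, T.Nonempty ∧ T ≠ S ∧
      ((∀ x ∈ T, ∀ y ∈ S, y ∉ T → ¬ H.Adj x y) ∨ (∀ x ∈ T, ∀ y ∈ S, y ∉ T → H.Adj x y)) := by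
  induction S using Finset.induction_on with
  | empty => simp at hS
  | insert v S hvS ih =>
    rw [Finset.card_insert_of_notMem hvS] at hS
    have hvne : ({v} : Finset V) ≠ insert v S := by
      intro h
      have := congrArg Finset.card h
      rw [Finset.card_insert_of_notMem hvS, Finset.card_singleton] at this
      omega
    by_cases hall : ∀ y ∈ S, H.Adj v y
    · refine ⟨{v}, by simp, by simp, hvne, Or.inr ?_⟩
      simp only [Finset.mem_singleton, Finset.mem_insert]
      rintro x rfl y (rfl | hy) hne
      · exact absurd rfl hne
      · exact hall y hy
    by_cases hnone : ∀ y ∈ S, ¬ H.Adj v y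
    · refine ⟨{v}, by simp, by simp, hvne, Or.inl ?_⟩
      simp only [Finset.mem_singleton, Finset.mem_insert]
      rintro x rfl y (rfl | hy) hne
      · exact absurd rfl hne
      · exact hnone y hy
    push Not at hall hnone
    obtain ⟨z, hzS, hvz⟩ := hall
    obtain ⟨w, hwS, hvw⟩ := hnone
    have hzw : z ≠ w := by rintro rfl; exact hvz hvw
    obtain ⟨T, hTS, ⟨t, ht⟩, hTne, hT⟩ := ih (Finset.one_lt_card.2 ⟨z, hzS, w, hwS, hzw⟩)
    have hTne' : S \ T ≠ S := fun h => by
      have : t ∈ S \ T := h.symm ▸ hTS ht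
      exact (Finset.mem_sdiff.1 this).2 ht
    rcases hT with hT | hT
    · have key : ∃ R ⊆ insert v S, R.Nonempty ∧ R ≠ insert v S ∧
          ∀ x ∈ R, ∀ y ∈ insert v S, y ∉ R → ¬ H.Adj x y := by
        by_cases hzT : z ∈ T
        · exact hH.anticomplete_split_insert hvS hTS hTne hT hzT hvz
        · refine hH.anticomplete_split_insert hvS Finset.sdiff_subset hTne' ?_
            (Finset.mem_sdiff.2 ⟨hzS, hzT⟩) hvz
          intro x hx y hy hyn hadj
          simp only [Finset.mem_sdiff, not_and, not_not] at hx hyn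
          exact hT y (hyn hy) x hx.1 hx.2 hadj.symm
      obtain ⟨R, h₁, h₂, h₃, h₄⟩ := key
      exact ⟨R, h₁, h₂, h₃, Or.inl h₄⟩
    · have key : ∃ R ⊆ insert v S, R.Nonempty ∧ R ≠ insert v S ∧
          ∀ x ∈ R, ∀ y ∈ insert v S, y ∉ R → ¬ Hᶜ.Adj x y := by
        have hvw' : ¬ Hᶜ.Adj v w := fun h => h.2 hvw
        by_cases hwT : w ∈ T
        · exact hH.compl.anticomplete_split_insert hvS hTS hTne
            (fun x hx y hy hyn h => h.2 (hT x hx y hy hyn)) hwT hvw'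
        · refine hH.compl.anticomplete_split_insert hvS Finset.sdiff_subset hTne' ?_
            (Finset.mem_sdiff.2 ⟨hwS, hwT⟩) hvw'
          intro x hx y hy hyn hadj
          simp only [Finset.mem_sdiff, not_and, not_not] at hx hyn
          exact hadj.2 (hT y (hyn hy) x hx.1 hx.2).symm
      obtain ⟨R, h₁, h₂, h₃, h₄⟩ := key
      refine ⟨R, h₁, h₂, h₃, Or.inr fun x hx y hy hyn => ?_⟩
      by_contra hadj
      exact h₄ x hx y hy hyn ⟨fun h => hyn (h ▸ hx), hadj⟩

/-- The constraints that short induced paths impose on the neighbourhoods `N v` (`v ∈ B`), viewed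
as vertex subsets of the graph `H`. -/
structure ParityNeighborhoods (G H : SimpleGraph V) (B : Set V) (N : V → Finset V) : Prop where
  nonempty : ∀ u ∈ B, (N u).Nonempty
  stable : ∀ u ∈ B, ∀ p ∈ N u, ∀ q ∈ N u, ¬ H.Adj p q
  edge : ∀ u ∈ B, ∀ v ∈ B, G.Adj u v →
    ∀ p ∈ N u, p ∉ N v → ∀ q ∈ N v, q ∉ N u → H.Adj p q
  path : ∀ u ∈ B, ∀ v ∈ B, ∀ w ∈ B, G.Adj u v → G.Adj v w → u ≠ w → ¬ G.Adj u w →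
    ∀ p ∈ N u, p ∉ N v → p ∉ N w → ∀ q ∈ N w, q ∉ N u → q ∉ N v → ¬ H.Adj p q

namespace ParityNeighborhoods

variable {G H : SimpleGraph V} {B : Set V} {N : V → Finset V}

/-- If the neighbourhoods of a nonempty proper part `D` of a clique `C` are contained in all those
of the remaining vertices of `C`, then the vertices of `C` have a common neighbour. -/
theorem exists_common (h : ParityNeighborhoods G H B N) {C D : Finset V} (hCB : ↑C ⊆ B)
    (hC : G.IsClique C) (hDC : D ⊆ C) (hD : D.Nonempty) {v : V} (hvC : v ∈ C) (hvD : v ∉ D)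
    (hsub : ∀ c ∈ D, ∀ w ∈ C, w ∉ D → N c ⊆ N w) : ∃ p, ∀ c ∈ C, p ∈ N c := by
  obtain ⟨d, hd, hmin⟩ := Finset.exists_min_image D (fun c => (N c).card) hD
  obtain ⟨p, hp⟩ := h.nonempty d (hCB (hDC hd))
  refine ⟨p, fun c hc => ?_⟩
  by_cases hcD : c ∈ D
  · by_contra hpc
    have hcd : c ≠ d := by rintro rfl; exact hpc hp
    have hss : N c ⊂ N d := by
      refine Finset.ssubset_iff_subset_ne.2 ⟨fun q hq => ?_, fun heq => hpc (heq ▸ hp)⟩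
      by_contra hqd
      exact h.stable v (hCB hvC) p (hsub d hd v hvC hvD hp) q (hsub c hcD v hvC hvD hq)
        (h.edge d (hCB (hDC hd)) c (hCB hc) (hC (hDC hd) hc hcd.symm) p hp hpc q hq hqd)
    exact absurd (Finset.card_lt_card hss) (not_lt.2 (hmin c hcD))
  · exact hsub d hd c hc hcD hp

open Classical in
/-- If a member of a clique has its neighbourhood inside one side `T` of an anticomplete splitting,
then so do all of them, unless there is a common neighbour. -/
theorem forall_subset_or_common (h : ParityNeighborhoods G H B N) {C S T : Finset V}
    (hCB : ↑C ⊆ B) (hC : G.IsClique C) (hCS : ∀ c ∈ C, N c ⊆ S)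
    (hT : ∀ x ∈ T, ∀ y ∈ S, y ∉ T → ¬ H.Adj x y) {c : V} (hc : c ∈ C) (hcT : N c ⊆ T) :
    (∀ c ∈ C, N c ⊆ T) ∨ ∃ p, ∀ c ∈ C, p ∈ N c := by
  by_cases hall : ∀ c ∈ C, N c ⊆ T
  · exact Or.inl hall
  push Not at hall
  obtain ⟨v, hvC, hvT⟩ := hall
  refine Or.inr (h.exists_common (D := C.filter fun c => N c ⊆ T) hCB hC
    (Finset.filter_subset _ _) ⟨c, by simp [hc, hcT]⟩ hvC (by simp [hvT]) ?_)
  intro d hd w hw hwD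
  simp only [Finset.mem_filter, not_and] at hd hwD
  obtain ⟨q, hqw, hqT⟩ := Finset.not_subset.1 (hwD hw)
  intro p hp
  by_contra hpw
  have hdw : d ≠ w := by rintro rfl; exact hpw hp
  exact hT p (hd.2 hp) q (hCS w hw hqw) hqT
    (h.edge d (hCB hd.1) w (hCB hw) (hC hd.1 hw hdw) p hp hpw q hqw fun hq => hqT (hd.2 hq))

/-- A nonempty clique whose vertices all have neighbours on both sides of an anticomplete splitting
has a common neighbour. -/
theorem exists_common_of_meets_both (h : ParityNeighborhoods G H B N) {C S T : Finset V}
    (hCB : ↑C ⊆ B) (hC : G.IsClique C) (hCne : C.Nonempty) (hCS : ∀ c ∈ C, N c ⊆ S)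
    (hT : ∀ x ∈ T, ∀ y ∈ S, y ∉ T → ¬ H.Adj x y)
    (hmeet : ∀ c ∈ C, ∃ p ∈ N c, p ∈ T) (hmeet' : ∀ c ∈ C, ∃ q ∈ N c, q ∉ T) :
    ∃ p, ∀ c ∈ C, p ∈ N c := by
  obtain ⟨u, hu, hmin⟩ := Finset.exists_min_image C (fun c => (N c).card) hCne
  have hcross : ∀ v ∈ C, ∀ w ∈ C, ∀ p ∈ N v, p ∉ N w → ∀ q ∈ N w, q ∉ N v → (p ∈ T ↔ q ∈ T) := by
    intro v hv w hw p hp hpw q hq hqv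
    have hvw : v ≠ w := by rintro rfl; exact hpw hp
    have hadj := h.edge v (hCB hv) w (hCB hw) (hC hv hw hvw) p hp hpw q hq hqv
    constructor
    · intro hpT
      by_contra hqT
      exact hT p hpT q (hCS w hw hq) hqT hadj
    · intro hqT
      by_contra hpT
      exact hT q hqT p (hCS v hv hp) hpT hadj.symm
  have hagree : ∀ v ∈ C, ∀ p ∈ N u, p ∉ N v → ∀ q ∈ N u, q ∉ N v → (p ∈ T ↔ q ∈ T) := by
    intro v hv p hp hpv q hq hqv
    obtain ⟨r, hrv, hru⟩ : ∃ r ∈ N v, r ∉ N u := by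
      by_contra! hno
      have hss : N v ⊂ N u := Finset.ssubset_iff_subset_ne.2 ⟨hno, fun heq => hpv (heq ▸ hp)⟩
      exact absurd (Finset.card_lt_card hss) (not_lt.2 (hmin v hv))
    exact (hcross u hu v hv p hp hpv r hrv hru).trans (hcross u hu v hv q hq hqv r hrv hru).symm
  obtain ⟨p₀, hp₀, hp₀T⟩ := hmeet u hu
  obtain ⟨q₀, hq₀, hq₀T⟩ := hmeet' u hu
  by_contra! hno
  obtain ⟨v, hv, hpv⟩ := hno p₀
  obtain ⟨w, hw, hqw⟩ := hno q₀
  have hqv : q₀ ∈ N v := by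
    by_contra hqv
    exact hq₀T ((hagree v hv p₀ hp₀ hpv q₀ hq₀ hqv).1 hp₀T)
  have hpw : p₀ ∈ N w := by
    by_contra hpw
    exact hq₀T ((hagree w hw p₀ hp₀ hpw q₀ hq₀ hqw).1 hp₀T)
  exact hq₀T ((hcross w hw v hv p₀ hpw hpv q₀ hqv hqw).1 hp₀T)

/-- Without a common neighbour, the neighbourhoods of the vertices of a clique all lie on one side
of an anticomplete splitting. -/
theorem one_sided_of_anticomplete (h : ParityNeighborhoods G H B N) {C S T : Finset V}
    (hCB : ↑C ⊆ B) (hC : G.IsClique C) (hCne : C.Nonempty) (hCS : ∀ c ∈ C, N c ⊆ S)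
    (hT : ∀ x ∈ T, ∀ y ∈ S, y ∉ T → ¬ H.Adj x y) (hno : ¬ ∃ p, ∀ c ∈ C, p ∈ N c) :
    (∀ c ∈ C, N c ⊆ T) ∨ (∀ c ∈ C, ∀ p ∈ N c, p ∉ T) := by
  classical
  by_cases h₁ : ∃ c ∈ C, N c ⊆ T
  · obtain ⟨c, hc, hcT⟩ := h₁
    exact Or.inl ((h.forall_subset_or_common hCB hC hCS hT hc hcT).resolve_right hno)
  by_cases h₂ : ∃ c ∈ C, ∀ p ∈ N c, p ∉ T
  · obtain ⟨c, hc, hcT⟩ := h₂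
    have hside := (h.forall_subset_or_common (T := S \ T) hCB hC hCS
      (fun x hx y hy hyn hadj => by
        simp only [Finset.mem_sdiff, not_and, not_not] at hx hyn
        exact hT y (hyn hy) x hx.1 hx.2 hadj.symm) hc
      (fun p hp => Finset.mem_sdiff.2 ⟨hCS c hc hp, hcT p hp⟩)).resolve_right hno
    exact Or.inr fun c hc p hp => (Finset.mem_sdiff.1 (hside c hc hp)).2
  push Not at h₁ h₂
  exact absurd (h.exists_common_of_meets_both hCB hC hCne hCS hT h₂
    fun c hc => Finset.not_subset.1 (h₁ c hc)) hno

open Classical in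
/-- Let `T` and `T'` be complete to each other in `H`. A clique with neighbourhoods inside `T` and
without a common neighbour has no vertex adjacent to a vertex `w` whose neighbourhood is inside
`T'`, unless `w` is complete to the clique. -/
theorem not_adj_of_complete (h : ParityNeighborhoods G H B N) {C T T' : Finset V}
    (hCB : ↑C ⊆ B) (hC : G.IsClique C) (hdisj : Disjoint T T')
    (hT : ∀ x ∈ T, ∀ y ∈ T', H.Adj x y) (hCT : ∀ c ∈ C, N c ⊆ T)
    (hno : ¬ ∃ p, ∀ c ∈ C, p ∈ N c) {w : V} (hwB : w ∈ B) (hwT : N w ⊆ T')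
    (hw : ∃ c ∈ C, ¬ G.Adj c w) {v : V} (hv : v ∈ C) : ¬ G.Adj v w := by
  intro hvw
  obtain ⟨d₀, hd₀, hd₀w⟩ := hw
  refine hno (h.exists_common (D := C.filter fun c => ¬ G.Adj c w) hCB hC
    (Finset.filter_subset _ _) ⟨d₀, by simp [hd₀, hd₀w]⟩ hv (by simp [hvw]) ?_)
  intro d hd u hu huD p hp
  simp only [Finset.mem_filter, not_and, not_not] at hd huD
  by_contra hpu
  have hdu : d ≠ u := by rintro rfl; exact hpu hp
  obtain ⟨q, hq⟩ := h.nonempty w hwB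
  have hout : ∀ c ∈ C, q ∉ N c := fun c hc hqc =>
    Finset.disjoint_left.1 hdisj (hCT c hc hqc) (hwT hq)
  have hpT := hCT d hd.1 hp
  have hpw : p ∉ N w := fun hpw => Finset.disjoint_left.1 hdisj hpT (hwT hpw)
  have hdw : d ≠ w := by rintro rfl; exact hpw hp
  exact h.path d (hCB hd.1) u (hCB hu) w hwB (hC hd.1 hu hdu) (huD hu) hdw hd.2 p hp hpu hpw
    q hq (hout d hd.1) (hout u hu) (hT p hpT q (hwT hq))

open Classical in
/-- Largest cliques whose neighbourhoods lie in `S` can be simultaneously split by a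
two-colouring. -/
theorem exists_coloring (h : ParityNeighborhoods G H B N) (hH : IsCograph H) {W : ℕ} (hW : 0 < W)
    (hfree : G.CliqueFree (W + 1))
    (hno : ∀ C : Finset V, ↑C ⊆ B → G.IsNClique W C → ¬ ∃ p, ∀ c ∈ C, p ∈ N c) (S : Finset V) :
    ∃ f : V → Prop, ∀ C : Finset V, ↑C ⊆ B → G.IsNClique W C → (∀ c ∈ C, N c ⊆ S) →
      (∃ x ∈ C, f x) ∧ (∃ y ∈ C, ¬ f y) := by
  induction S using Finset.strongInduction with
  | H S ih =>
  have hCne : ∀ C : Finset V, G.IsNClique W C → C.Nonempty := fun C hC =>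
    Finset.card_pos.1 (hC.card_eq.symm ▸ hW)
  by_cases hS : 2 ≤ S.card
  · obtain ⟨T, hTS, ⟨t, ht⟩, hTne, hT⟩ := hH.exists_split S hS
    obtain ⟨f, hf⟩ := ih T (Finset.ssubset_iff_subset_ne.2 ⟨hTS, hTne⟩)
    obtain ⟨g, hg⟩ := ih (S \ T) (Finset.sdiff_ssubset hTS ⟨t, ht⟩)
    rcases hT with hT | hT
    · refine ⟨fun v => if N v ⊆ T then f v else g v, fun C hCB hC hCS => ?_⟩
      rcases h.one_sided_of_anticomplete hCB hC.isClique (hCne C hC) hCS hT (hno C hCB hC)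
        with hside | hside
      · obtain ⟨⟨x, hx, hfx⟩, y, hy, hfy⟩ := hf C hCB hC hside
        exact ⟨⟨x, hx, by simpa [hside x hx] using hfx⟩, y, hy, by simpa [hside y hy] using hfy⟩
      · have hside' : ∀ c ∈ C, ¬ N c ⊆ T := fun c hc hcT => by
          obtain ⟨p, hp⟩ := h.nonempty c (hCB hc)
          exact hside c hc p hp (hcT hp)
        obtain ⟨⟨x, hx, hgx⟩, y, hy, hgy⟩ := hg C hCB hC fun c hc p hp =>
          Finset.mem_sdiff.2 ⟨hCS c hc hp, hside c hc p hp⟩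
        exact ⟨⟨x, hx, by simpa [hside' x hx] using hgx⟩, y, hy,
          by simpa [hside' y hy] using hgy⟩
    · have hcomp : ∀ x ∈ T, ∀ y ∈ S \ T, H.Adj x y := fun x hx y hy =>
        hT x hx y (Finset.mem_sdiff.1 hy).1 (Finset.mem_sdiff.1 hy).2
      have hside : ∀ v ∈ B, N v ⊆ S → ¬ N v ⊆ T → N v ⊆ S \ T := by
        intro v hv hvS hvT p hp
        obtain ⟨q, hq, hqT⟩ := Finset.not_subset.1 hvT
        refine Finset.mem_sdiff.2 ⟨hvS hp, fun hpT => ?_⟩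
        exact h.stable v hv p hp q hq (hT p hpT q (hvS hq) hqT)
      have hmiss : ∀ C : Finset V, G.IsNClique W C → ∀ w, ∃ c ∈ C, ¬ G.Adj c w := by
        intro C hC w
        by_contra! hall
        exact hfree _ (hC.insert fun c hc => (hall c hc).symm)
      refine ⟨fun v => if N v ⊆ T then f v ∨ ∃ w ∈ B, N w ⊆ S \ T ∧ G.Adj v w
        else g v ∧ ¬ ∃ w ∈ B, N w ⊆ T ∧ G.Adj v w, fun C hCB hC hCS => ?_⟩
      by_cases hCT : ∀ c ∈ C, N c ⊆ T
      · have hnadj : ∀ c ∈ C, ¬ ∃ w ∈ B, N w ⊆ S \ T ∧ G.Adj c w := by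
          rintro c hc ⟨w, hwB, hwT, hcw⟩
          exact h.not_adj_of_complete hCB hC.isClique Finset.disjoint_sdiff hcomp hCT
            (hno C hCB hC) hwB hwT (hmiss C hC w) hc hcw
        obtain ⟨⟨x, hx, hfx⟩, y, hy, hfy⟩ := hf C hCB hC hCT
        refine ⟨⟨x, hx, ?_⟩, y, hy, ?_⟩
        · beta_reduce; rw [if_pos (hCT x hx)]; exact Or.inl hfx
        · beta_reduce; rw [if_pos (hCT y hy)]; exact not_or.2 ⟨hfy, hnadj y hy⟩
      by_cases hCT' : ∀ c ∈ C, ¬ N c ⊆ T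
      · have hCsdiff : ∀ c ∈ C, N c ⊆ S \ T := fun c hc =>
          hside c (hCB hc) (hCS c hc) (hCT' c hc)
        have hnadj : ∀ c ∈ C, ¬ ∃ w ∈ B, N w ⊆ T ∧ G.Adj c w := by
          rintro c hc ⟨w, hwB, hwT, hcw⟩
          exact h.not_adj_of_complete hCB hC.isClique Finset.sdiff_disjoint
            (fun x hx y hy => (hcomp y hy x hx).symm) hCsdiff
            (hno C hCB hC) hwB hwT (hmiss C hC w) hc hcw
        obtain ⟨⟨x, hx, hgx⟩, y, hy, hgy⟩ := hg C hCB hC hCsdiff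
        refine ⟨⟨x, hx, ?_⟩, y, hy, ?_⟩
        · beta_reduce; rw [if_neg (hCT' x hx)]; exact ⟨hgx, hnadj x hx⟩
        · beta_reduce; rw [if_neg (hCT' y hy)]; exact fun hgy' => hgy hgy'.1
      push Not at hCT hCT'
      obtain ⟨y, hy, hyT⟩ := hCT
      obtain ⟨x, hx, hxT⟩ := hCT'
      have hxy : G.Adj x y := hC.isClique hx hy (by rintro rfl; exact hyT hxT)
      refine ⟨⟨x, hx, ?_⟩, y, hy, ?_⟩
      · beta_reduce; rw [if_pos hxT]
        exact Or.inr ⟨y, hCB hy, hside y (hCB hy) (hCS y hy) hyT, hxy⟩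
      · beta_reduce; rw [if_neg hyT]
        exact fun hgy => hgy.2 ⟨x, hCB hx, hxT, hxy.symm⟩
  · refine ⟨fun _ => True, fun C hCB hC hCS => absurd ?_ (hno C hCB hC)⟩
    obtain ⟨c, hc⟩ := hCne C hC
    obtain ⟨p, hp⟩ := h.nonempty c (hCB hc)
    refine ⟨p, fun d hd => ?_⟩
    obtain ⟨q, hq⟩ := h.nonempty d (hCB hd)
    have hpq : q = p :=
      Finset.card_le_one.1 (by omega) q (hCS d hd hq) p (hCS c hc hp)
    exact hpq ▸ hq

end ParityNeighborhoods

open Classical in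
/-- If a graph `H` on a stable set `A` records the parity of the induced paths joining vertices of
`A` through its complement, then the neighbourhoods in `A` satisfy the constraints of
`ParityNeighborhoods`. -/
theorem parityNeighborhoods_of_parity [Fintype V] {G H : SimpleGraph V} {A B : Set V}
    (hAB : Disjoint A B) (hstable : ∀ x ∈ A, ∀ y ∈ A, ¬ G.Adj x y)
    (hnbr : ∀ b ∈ B, ∃ a ∈ A, G.Adj b a)
    (hpar : ∀ u v : V, u ∈ A → v ∈ A → u ≠ v → ∀ p : G.Walk u v,
       IsInducedPath G p → InteriorIn G p Aᶜ → (H.Adj u v ↔ Odd p.length)) :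
    ParityNeighborhoods G H B fun v => Finset.univ.filter fun a => a ∈ A ∧ G.Adj v a := by
  have hBA : ∀ b ∈ B, b ∉ A := fun b hb ha => Set.disjoint_left.1 hAB ha hb
  refine ⟨?_, ?_, ?_, ?_⟩
  · intro u hu
    obtain ⟨a, ha, hua⟩ := hnbr u hu
    exact ⟨a, by simp [ha, hua]⟩
  · intro u hu p hp q hq
    simp only [Finset.mem_filter, Finset.mem_univ, true_and] at hp hq
    by_cases hpq : p = q
    · rw [hpq]; exact H.irrefl
    have huA := hBA u hu
    have hpq' := hstable p hp.1 q hq.1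
    have hodd := hpar p q hp.1 hq.1 hpq (.cons hp.2.symm (.cons hq.2 .nil)) ⟨?_, ?_⟩ ?_
    · simp [hodd]
    · have := hp.2.ne; have := hq.2.ne
      simp; grind
    · have := hp.2.ne; have := hq.2.ne
      simp [IsInducedWalk]; grind [SimpleGraph.adj_comm, SimpleGraph.irrefl]
    · simp [InteriorIn]; grind
  · intro u hu v hv huv p hp hpv q hq hqu
    simp only [Finset.mem_filter, Finset.mem_univ, true_and, not_and] at hp hq hpv hqu
    replace hpv := hpv hp.1
    replace hqu := hqu hq.1
    have huA := hBA u hu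
    have hvA := hBA v hv
    have hpq : p ≠ q := by rintro rfl; exact hpv hq.2
    have hpq' := hstable p hp.1 q hq.1
    have hodd := hpar p q hp.1 hq.1 hpq (.cons hp.2.symm (.cons huv (.cons hq.2 .nil)))
      ⟨?_, ?_⟩ ?_
    · rw [hodd]; exact ⟨1, rfl⟩
    · have := huv.ne
      simp; grind
    · simp [IsInducedWalk]; grind [SimpleGraph.adj_comm, SimpleGraph.irrefl]
    · simp [InteriorIn]; grind
  · intro u hu v hv w hw huv hvw hne huw p hp hpv hpw q hq hqu hqv
    simp only [Finset.mem_filter, Finset.mem_univ, true_and, not_and] at hp hq hpv hqu hpw hqv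
    replace hpv := hpv hp.1
    replace hpw := hpw hp.1
    replace hqu := hqu hq.1
    replace hqv := hqv hq.1
    have huA := hBA u hu
    have hvA := hBA v hv
    have hwA := hBA w hw
    have hpq : p ≠ q := by rintro rfl; exact hpw hq.2
    have hpq' := hstable p hp.1 q hq.1
    have hodd := hpar p q hp.1 hq.1 hpq
      (.cons hp.2.symm (.cons huv (.cons hvw (.cons hq.2 .nil)))) ⟨?_, ?_⟩ ?_
    · rw [hodd]; simp; decide
    · have := huv.ne
      have := hvw.ne
      simp; grind
    · simp [IsInducedWalk]; grind [SimpleGraph.adj_comm, SimpleGraph.irrefl]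
    · simp [InteriorIn]; grind

theorem stmt3 [Fintype V] (G : SimpleGraph V) (W : ℕ) (hW : 0 < W)
    (hω : G.cliqueNum ≤ W) (A B : Set V)
    (hpart : A ∪ B = Set.univ) (hAB : Disjoint A B)
    (hstable : ∀ x ∈ A, ∀ y ∈ A, ¬ G.Adj x y)
    (hnbr : ∀ b ∈ B, ∃ a ∈ A, G.Adj b a)
    (H : SimpleGraph V) (hco : IsCograph H)
    (hHA : ∀ x y, H.Adj x y → x ∈ A ∧ y ∈ A)
    (hpar : ∀ u v : V, u ∈ A → v ∈ A → u ≠ v → ∀ p : G.Walk u v,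
       IsInducedPath G p → InteriorIn G p Aᶜ → (H.Adj u v ↔ Odd p.length)) :
    ∃ X Y : Set V, X ∪ Y = B ∧ Disjoint X Y ∧
      ∀ C : Finset V, ↑C ⊆ B → G.IsNClique W C →
        (∃ x ∈ C, x ∈ X) ∧ (∃ y ∈ C, y ∈ Y) := by
  classical
  have hfree : G.CliqueFree (W + 1) := by
    intro C hC
    have := hC.isClique.card_le_cliqueNum
    rw [hC.card_eq] at this
    omega
  obtain ⟨f, hf⟩ := (parityNeighborhoods_of_parity hAB hstable hnbr hpar).exists_coloring hco hW
    hfree (by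
      rintro C - hC ⟨p, hp⟩
      refine hfree _ (hC.insert (a := p) fun c hc => ?_)
      exact (Finset.mem_filter.1 (hp c hc)).2.2.symm) Finset.univ
  refine ⟨{v | v ∈ B ∧ f v}, {v | v ∈ B ∧ ¬ f v}, ?_, ?_, fun C hCB hC => ?_⟩
  · ext v
    simp only [Set.mem_union, Set.mem_ofPred_eq]
    tauto
  · exact Set.disjoint_left.2 fun v hv hv' => hv'.2 hv.2
  · obtain ⟨⟨x, hx, hfx⟩, y, hy, hfy⟩ := hf C hCB hC fun c _ => Finset.subset_univ _
    exact ⟨⟨x, hx, hCB hx, hfx⟩, y, hy, hCB hy, hfy⟩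
end

section
/- Let (L0, L1, …, Lk) be a levelling in a graph G such that: Lk is stable; for every two vertices u, v ∈ Lk, all induced paths in G between u and v with interior in L0 ∪ ⋯ ∪ L(k−1) have the same parity; and for 1 ≤ i ≤ k−1, any two adjacent vertices of Li have the same set of parents. Let H be the graph on vertex set Lk in which distinct u, v are adjacent iff there is an induced path of odd length between them with interior in L0 ∪ ⋯ ∪ L(k−1). Then H is a cograph. -/
open SimpleGraph

universe u

variable {V : Type u}

section InducedPaths

variable {G : SimpleGraph V} {L : ℕ → Set V} {k : ℕ}

theorem IsInducedPath.nil (u : V) : IsInducedPath G (Walk.nil : G.Walk u u) := by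
  refine ⟨Walk.IsPath.nil, fun x hx y hy hxy => ?_⟩
  simp only [Walk.support_nil, List.mem_singleton] at hx hy
  subst hx hy
  exact absurd rfl hxy.ne

theorem isInducedPath_cons {u v w : V} (h : G.Adj u v) (p : G.Walk v w) :
    IsInducedPath G (Walk.cons h p) ↔
      IsInducedPath G p ∧ u ∉ p.support ∧ ∀ t ∈ p.support, G.Adj u t → t = v := by
  constructor
  · rintro ⟨hp, hi⟩
    rw [Walk.cons_isPath_iff] at hp
    refine ⟨⟨hp.1, fun x hx y hy hxy => ?_⟩, hp.2, fun t ht hut => ?_⟩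
    · have := hi x (by simp [hx]) y (by simp [hy]) hxy
      simp only [Walk.toSubgraph, Subgraph.sup_adj, subgraphOfAdj_adj, Sym2.eq_iff] at this
      rcases this with (⟨rfl, -⟩ | ⟨rfl, -⟩) | h1
      · exact absurd hx hp.2
      · exact absurd hy hp.2
      · exact h1
    · have := hi u (by simp) t (by simp [ht]) hut
      simp only [Walk.toSubgraph, Subgraph.sup_adj, subgraphOfAdj_adj, Sym2.eq_iff] at this
      rcases this with (⟨-, rfl⟩ | ⟨rfl, -⟩) | h1
      · rfl
      · exact absurd ht hp.2
      · exact absurd ((Walk.mem_verts_toSubgraph p).1 h1.fst_mem) hp.2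
  · rintro ⟨⟨hp, hi⟩, hu, hadj⟩
    refine ⟨(Walk.cons_isPath_iff h p).2 ⟨hp, hu⟩, fun x hx y hy hxy => ?_⟩
    simp only [Walk.support_cons, List.mem_cons] at hx hy
    simp only [Walk.toSubgraph, Subgraph.sup_adj, subgraphOfAdj_adj, Sym2.eq_iff]
    rcases hx with rfl | hx <;> rcases hy with rfl | hy
    · exact absurd rfl hxy.ne
    · exact Or.inl (Or.inl ⟨rfl, (hadj y hy hxy).symm⟩)
    · exact Or.inl (Or.inr ⟨rfl, (hadj x hx hxy.symm).symm⟩)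
    · exact Or.inr (hi x hx y hy hxy)

theorem IsInducedPath.reverse {u v : V} {p : G.Walk u v} (hp : IsInducedPath G p) :
    IsInducedPath G p.reverse := by
  refine ⟨hp.1.reverse, fun x hx y hy hxy => ?_⟩
  rw [Walk.toSubgraph_reverse]
  rw [Walk.support_reverse, List.mem_reverse] at hx hy
  exact hp.2 x hx y hy hxy

theorem InteriorIn.reverse {u v : V} {p : G.Walk u v} {S : Set V} (hp : InteriorIn G p S) :
    InteriorIn G p.reverse S := by
  intro x hx h1 h2
  rw [Walk.support_reverse, List.mem_reverse] at hx
  exact hp x hx h2 h1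

theorem IsInducedPath.exists_from_neighbor {w v : V} (q : G.Walk w v) (hq : IsInducedPath G q)
    (u : V) (hu : u ∈ q.support ∨ ∃ t ∈ q.support, G.Adj u t) :
    ∃ p : G.Walk u v, IsInducedPath G p ∧ ∀ t ∈ p.support, t = u ∨ t ∈ q.support := by
  induction q with
  | nil =>
    simp only [Walk.support_nil, List.mem_singleton, exists_eq_left] at hu
    rcases hu with rfl | hu
    · exact ⟨Walk.nil, IsInducedPath.nil _, by simp⟩
    · refine ⟨Walk.cons hu Walk.nil, (isInducedPath_cons _ _).2 ⟨hq, ?_, ?_⟩, by simp⟩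
      · simpa using hu.ne
      · simp
  | @cons w x v h q ih =>
    have hq' := (isInducedPath_cons _ _).1 hq
    by_cases hc : u ∈ q.support ∨ ∃ t ∈ q.support, G.Adj u t
    · obtain ⟨p, hp, hs⟩ := ih hq'.1 hc
      refine ⟨p, hp, fun t ht => ?_⟩
      rcases hs t ht with h1 | h1
      · exact Or.inl h1
      · exact Or.inr (by simp [h1])
    · push Not at hc
      by_cases huw : u = w
      · subst huw
        exact ⟨_, hq, fun t ht => Or.inr ht⟩
      · have hadj : G.Adj u w := by
          rcases hu with hu | ⟨t, ht, hut⟩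
          · simp [huw, hc.1] at hu
          · simp only [Walk.support_cons, List.mem_cons] at ht
            rcases ht with rfl | ht
            · exact hut
            · exact absurd hut (hc.2 t ht)
        refine ⟨Walk.cons hadj (Walk.cons h q), (isInducedPath_cons _ _).2 ⟨hq, ?_, ?_⟩, by simp⟩
        · simp [huw, hc.1]
        · intro t ht hut
          simp only [Walk.support_cons, List.mem_cons] at ht
          rcases ht with rfl | ht
          · rfl
          · exact absurd hut (hc.2 t ht)

theorem exists_isInducedPath_of_walk {u v : V} (p : G.Walk u v) :
    ∃ q : G.Walk u v, IsInducedPath G q ∧ ∀ t ∈ q.support, t ∈ p.support := by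
  induction p with
  | nil => exact ⟨Walk.nil, IsInducedPath.nil _, by simp⟩
  | @cons u w v h p ih =>
    obtain ⟨q, hq, hs⟩ := ih
    obtain ⟨r, hr, ht⟩ := hq.exists_from_neighbor q u (Or.inr ⟨w, by simp, h⟩)
    refine ⟨r, hr, fun t htr => ?_⟩
    rcases ht t htr with rfl | h1
    · simp
    · simp [hs t h1]

theorem mem_lowerLevels {x : V} : x ∈ lowerLevels L k ↔ ∃ i < k, x ∈ L i := by
  simp [lowerLevels]

theorem lowerLevels_mono {j : ℕ} (h : j ≤ k) : lowerLevels L j ⊆ lowerLevels L k := by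
  intro x hx
  obtain ⟨i, hi, hx⟩ := mem_lowerLevels.1 hx
  exact mem_lowerLevels.2 ⟨i, hi.trans_le h, hx⟩

/-- There is an even induced path between `u` and `v` with interior in the lower levels. -/
def EvenConn (G : SimpleGraph V) (L : ℕ → Set V) (k : ℕ) (u v : V) : Prop :=
  u ≠ v ∧ ∃ p : G.Walk u v, IsInducedPath G p ∧ Even p.length ∧
    InteriorIn G p (lowerLevels L k)

theorem OddConn.symm {u v : V} (h : OddConn G L k u v) : OddConn G L k v u := by
  obtain ⟨hne, p, hp, ho, hi⟩ := h
  exact ⟨hne.symm, p.reverse, hp.reverse, by simpa using ho, hi.reverse⟩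

theorem oddConn_of_adj {u v : V} (h : G.Adj u v) : OddConn G L k u v := by
  refine ⟨h.ne, Walk.cons h Walk.nil, (isInducedPath_cons _ _).2 ⟨IsInducedPath.nil _, ?_, ?_⟩,
    by simp, ?_⟩
  · simpa using h.ne
  · simp
  · intro x hx h1 h2
    simp [h1, h2] at hx

theorem evenConn_of_common_neighbor {u v x : V} (hne : u ≠ v) (huv : ¬ G.Adj u v)
    (hx : x ∈ lowerLevels L k) (hu : G.Adj u x) (hv : G.Adj x v) : EvenConn G L k u v := by
  refine ⟨hne, Walk.cons hu (Walk.cons hv Walk.nil), ?_, by simp, ?_⟩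
  · simp only [isInducedPath_cons, IsInducedPath.nil, Walk.support_cons, Walk.support_nil,
      List.mem_cons, List.not_mem_nil, or_false, true_and]
    refine ⟨⟨hv.ne, by simp⟩, by simp [hne, hu.ne], ?_⟩
    rintro t (rfl | rfl) ht
    · rfl
    · exact absurd ht huv
  · intro t ht h1 h2
    simp only [Walk.support_cons, Walk.support_nil, List.mem_cons, List.not_mem_nil, h1, h2,
      false_or, or_false] at ht
    exact ht ▸ hx

namespace IsLevelling

theorem mono (h : IsLevelling G k L) {j : ℕ} (hj : j ≤ k) : IsLevelling G j L :=
  ⟨fun i i' hi hi' => h.1 i i' (hi.trans hj) (hi'.trans hj), h.2.1,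
    fun i hi hi' => h.2.2 i hi (hi'.trans hj)⟩

theorem not_mem_lowerLevels (h : IsLevelling G k L) {x : V} (hx : x ∈ L k) :
    x ∉ lowerLevels L k := by
  intro hl
  obtain ⟨i, hi, hxi⟩ := mem_lowerLevels.1 hl
  exact Set.disjoint_left.1 (h.1 i k hi.le le_rfl hi.ne) hxi hx

theorem not_adj_lowerLevels (h : IsLevelling G (k + 1) L) {x y : V} (hx : x ∈ L (k + 1))
    (hy : y ∈ lowerLevels L k) : ¬ G.Adj x y := by
  obtain ⟨i, hi, hyi⟩ := mem_lowerLevels.1 hy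
  exact fun hadj => (h.2.2 (k + 1) (by omega) le_rfl x hx).2 i (by omega) y hyi hadj.symm

theorem exists_walk_to_root (h : IsLevelling G k L) {r : V} (hr : L 0 = {r}) {x : V}
    (hx : x ∈ L k) :
    ∃ p : G.Walk x r, ∀ t ∈ p.support, t = x ∨ t ∈ lowerLevels L k := by
  induction k generalizing x with
  | zero =>
    rw [hr] at hx
    obtain rfl := Set.mem_singleton_iff.1 hx
    exact ⟨Walk.nil, by simp⟩
  | succ k ih =>
    obtain ⟨y, hy, hyx⟩ := (h.2.2 (k + 1) (by omega) le_rfl x hx).1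
    obtain ⟨p, hp⟩ := ih (h.mono (Nat.le_succ k)) hy
    refine ⟨Walk.cons hyx.symm p, fun t ht => ?_⟩
    simp only [Walk.support_cons, List.mem_cons] at ht
    rcases ht with rfl | ht
    · exact Or.inl rfl
    · rcases hp t ht with rfl | h1
      · exact Or.inr (mem_lowerLevels.2 ⟨k, by omega, hy⟩)
      · exact Or.inr (lowerLevels_mono (Nat.le_succ k) h1)

theorem oddConn_or_evenConn (h : IsLevelling G k L) {x y : V} (hx : x ∈ L k) (hy : y ∈ L k)
    (hne : x ≠ y) : OddConn G L k x y ∨ EvenConn G L k x y := by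
  obtain ⟨r, hr⟩ := h.2.1
  obtain ⟨p, hp⟩ := h.exists_walk_to_root hr hx
  obtain ⟨q, hq⟩ := h.exists_walk_to_root hr hy
  obtain ⟨w, hw, hs⟩ := exists_isInducedPath_of_walk (p.append q.reverse)
  have hi : InteriorIn G w (lowerLevels L k) := by
    intro t ht h1 h2
    have := hs t ht
    rw [Walk.mem_support_append_iff, Walk.support_reverse, List.mem_reverse] at this
    rcases this with h3 | h3
    · exact (hp t h3).resolve_left h1
    · exact (hq t h3).resolve_left h2
  rcases Nat.even_or_odd w.length with he | ho
  · exact Or.inr ⟨hne, w, hw, he, hi⟩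
  · exact Or.inl ⟨hne, w, hw, ho, hi⟩

/-- An induced path between two vertices of one level extends, by a private child at each end, to
an induced path that is longer by two. -/
theorem exists_extension (h : IsLevelling G (k + 1) L) {u v x y : V} (hu : u ∈ L (k + 1))
    (hv : v ∈ L (k + 1)) (hx : x ∈ L k) (hy : y ∈ L k) (hne : u ≠ v) (huv : ¬ G.Adj u v)
    (hxu : G.Adj x u) (hyv : G.Adj y v) (hxv : ¬ G.Adj x v) (hyu : ¬ G.Adj y u)
    (p : G.Walk x y) (hp : IsInducedPath G p) (hi : InteriorIn G p (lowerLevels L k)) :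
    ∃ q : G.Walk u v, IsInducedPath G q ∧ q.length = p.length + 2 ∧
      InteriorIn G q (lowerLevels L (k + 1)) := by
  have hlow : ∀ t ∈ p.support, t ∈ lowerLevels L (k + 1) := by
    intro t ht
    by_cases h1 : t = x
    · exact mem_lowerLevels.2 ⟨k, by omega, h1 ▸ hx⟩
    by_cases h2 : t = y
    · exact mem_lowerLevels.2 ⟨k, by omega, h2 ▸ hy⟩
    exact lowerLevels_mono (Nat.le_succ k) (hi t ht h1 h2)
  have h1 : IsInducedPath G (Walk.cons hxu.symm p) := by
    refine (isInducedPath_cons _ _).2 ⟨hp, fun hm => h.not_mem_lowerLevels hu (hlow u hm), ?_⟩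
    intro t ht hut
    by_contra h1
    by_cases h2 : t = y
    · exact hyu (h2 ▸ hut.symm)
    · exact h.not_adj_lowerLevels hu (hi t ht h1 h2) hut
  have h2 : IsInducedPath G (Walk.cons hyv.symm (Walk.cons hxu.symm p).reverse) := by
    refine (isInducedPath_cons _ _).2 ⟨h1.reverse, ?_, ?_⟩
    · simp only [Walk.support_reverse, List.mem_reverse, Walk.support_cons, List.mem_cons, not_or]
      exact ⟨hne.symm, fun hm => h.not_mem_lowerLevels hv (hlow v hm)⟩
    · intro t ht hvt
      simp only [Walk.support_reverse, List.mem_reverse, Walk.support_cons, List.mem_cons] at ht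
      rcases ht with rfl | ht
      · exact absurd hvt.symm huv
      · by_contra h1
        by_cases h2 : t = x
        · exact hxv (h2 ▸ hvt.symm)
        · exact h.not_adj_lowerLevels hv (hi t ht h2 h1) hvt
  refine ⟨_, h2.reverse, by simp, ?_⟩
  intro t ht hu' hv'
  simp only [Walk.support_reverse, List.mem_reverse, Walk.support_cons, List.mem_cons, hu', hv',
    false_or] at ht
  exact hlow t ht

theorem oddConn_succ (h : IsLevelling G (k + 1) L) {u v x y : V} (hu : u ∈ L (k + 1))
    (hv : v ∈ L (k + 1)) (hx : x ∈ L k) (hy : y ∈ L k) (hne : u ≠ v) (huv : ¬ G.Adj u v)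
    (hxu : G.Adj x u) (hyv : G.Adj y v) (hxv : ¬ G.Adj x v) (hyu : ¬ G.Adj y u)
    (hxy : OddConn G L k x y) : OddConn G L (k + 1) u v := by
  obtain ⟨-, p, hp, ho, hi⟩ := hxy
  obtain ⟨q, hq, hl, hqi⟩ :=
    h.exists_extension hu hv hx hy hne huv hxu hyv hxv hyu p hp hi
  exact ⟨hne, q, hq, by rw [hl]; exact ho.add_even even_two, hqi⟩

theorem evenConn_succ (h : IsLevelling G (k + 1) L) {u v x y : V} (hu : u ∈ L (k + 1))
    (hv : v ∈ L (k + 1)) (hx : x ∈ L k) (hy : y ∈ L k) (hne : u ≠ v) (huv : ¬ G.Adj u v)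
    (hxu : G.Adj x u) (hyv : G.Adj y v) (hxv : ¬ G.Adj x v) (hyu : ¬ G.Adj y u)
    (hxy : EvenConn G L k x y) : EvenConn G L (k + 1) u v := by
  obtain ⟨-, p, hp, he, hi⟩ := hxy
  obtain ⟨q, hq, hl, hqi⟩ :=
    h.exists_extension hu hv hx hy hne huv hxu hyv hxv hyu p hp hi
  exact ⟨hne, q, hq, by rw [hl]; exact he.add even_two, hqi⟩

/-- Replacing an end of an odd induced path by an adjacent vertex with the same parents. -/
theorem oddConn_of_adj_of_same_parents (h : IsLevelling G k L) {x y z : V}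
    (hy : y ∈ L k) (hz : z ∈ L k) (hyz : G.Adj y z)
    (hpar : 1 ≤ k → ∀ w ∈ L (k - 1), (G.Adj w y ↔ G.Adj w z))
    (hxy : ¬ G.Adj x y) (hxz : ¬ G.Adj x z) (hne : x ≠ z) (ho : OddConn G L k x y) :
    OddConn G L k x z := by
  obtain ⟨hyx, p, hp, ho, hi⟩ := ho.symm
  cases p with
  | nil => exact absurd rfl hyx
  | @cons _ w _ hyw p =>
    obtain ⟨hp', hyp, hadj⟩ := (isInducedPath_cons _ _).1 hp
    have hlow : ∀ t ∈ p.support, t ≠ x → t ∈ lowerLevels L k := fun t ht htx =>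
      hi t (by simp [ht]) (fun hty => hyp (hty ▸ ht)) htx
    have htwin : ∀ t ∈ lowerLevels L k, (G.Adj t y ↔ G.Adj t z) := by
      intro t ht
      obtain ⟨i, hik, hti⟩ := mem_lowerLevels.1 ht
      by_cases hik' : i + 1 = k
      · subst hik'
        exact hpar (by omega) t hti
      · exact iff_of_false ((h.2.2 k (by omega) le_rfl y hy).2 i (by omega) t hti)
          ((h.2.2 k (by omega) le_rfl z hz).2 i (by omega) t hti)
    have hwx : w ≠ x := fun e => hxy (e ▸ hyw.symm)
    have hwz : G.Adj z w := ((htwin w (hlow w (by simp) hwx)).1 hyw.symm).symm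
    refine OddConn.symm ⟨hne.symm, Walk.cons hwz p, (isInducedPath_cons _ _).2 ⟨hp', ?_, ?_⟩,
      by simpa using ho, ?_⟩
    · exact fun hzp => h.not_mem_lowerLevels hz (hlow z hzp hne.symm)
    · intro t ht hzt
      have htx : t ≠ x := fun e => hxz (e ▸ hzt.symm)
      exact hadj t ht ((htwin t (hlow t ht htx)).2 hzt.symm).symm
    · intro t ht htz htx
      simp only [Walk.support_cons, List.mem_cons, htz, false_or] at ht
      exact hlow t ht htx

end IsLevelling

theorem oddConn_of_induced_P6 {a x y z w d : V} (hax : G.Adj a x) (hxy : G.Adj x y)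
    (hyz : G.Adj y z) (hzw : G.Adj z w) (hwd : G.Adj w d) (hay : ¬ G.Adj a y) (haz : ¬ G.Adj a z)
    (haw : ¬ G.Adj a w) (had : ¬ G.Adj a d) (hxz : ¬ G.Adj x z) (hxw : ¬ G.Adj x w)
    (hxd : ¬ G.Adj x d) (hyw : ¬ G.Adj y w) (hyd : ¬ G.Adj y d) (hzd : ¬ G.Adj z d)
    (nad : a ≠ d)
    (hlow : x ∈ lowerLevels L k ∧ y ∈ lowerLevels L k ∧ z ∈ lowerLevels L k ∧
      w ∈ lowerLevels L k) : OddConn G L k a d := by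
  refine ⟨nad, Walk.cons hax (Walk.cons hxy (Walk.cons hyz (Walk.cons hzw (Walk.cons hwd
    Walk.nil)))), ?_, ⟨2, rfl⟩, ?_⟩
  · simp only [isInducedPath_cons, IsInducedPath.nil, Walk.support_cons, Walk.support_nil,
      List.mem_cons, List.not_mem_nil, or_false, true_and, forall_eq_or_imp, forall_eq, not_or]
    have := fun u v (h : G.Adj u v) => h.ne
    have := fun u v (h : G.Adj u v) => h.symm
    grind
  · intro t ht h1 h2
    simp only [Walk.support_cons, Walk.support_nil, List.mem_cons, List.not_mem_nil, h1, h2,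
      false_or, or_false] at ht
    grind

/-- The abstract combinatorial core: if vertices with a common parent are `H`-nonadjacent and
vertices `u`, `v` with private parents `x`, `y` are `H`-adjacent exactly when `E x y`, then no
two distinct vertices of an induced four-vertex path of `H` have a common parent. -/
theorem no_common_parent_of_P4 {α : Type*} {P : α → V → Prop} {E : α → α → Prop}
    {H : V → V → Prop} {a b c d : V} (hsymm : ∀ u v, H u v → H v u)
    (hcommon : ∀ u ∈ ({a, b, c, d} : Set V), ∀ v ∈ ({a, b, c, d} : Set V), ∀ x,
      P x u → P x v → ¬ H u v)
    (hprivate : ∀ u ∈ ({a, b, c, d} : Set V), ∀ v ∈ ({a, b, c, d} : Set V), ∀ x y,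
      P x u → P y v → ¬ P x v → ¬ P y u → (H u v ↔ E x y))
    (hex : ∀ u ∈ ({a, b, c, d} : Set V), ∃ x, P x u)
    (hab : H a b) (hbc : H b c) (hcd : H c d) (hac : ¬ H a c) (had : ¬ H a d) (hbd : ¬ H b d) :
    ∀ u ∈ ({a, b, c, d} : Set V), ∀ v ∈ ({a, b, c, d} : Set V), ∀ x, P x u → P x v → u = v := by
  simp only [Set.mem_insert_iff, Set.mem_singleton_iff, forall_eq_or_imp, forall_eq] at *
  obtain ⟨⟨xa, ha⟩, ⟨xb, hb⟩, ⟨xc, hc⟩, ⟨xd, hd⟩⟩ := hex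
  have hac' : ∀ x, P x a → P x c → False := by
    intro x h1 h2
    grind
  have hbd' : ∀ x, P x b → P x d → False := by
    intro x h1 h2
    grind
  have had' : ∀ x, P x a → P x d → False := by
    intro x h1 h2
    grind
  and_intros <;> intro x h1 h2 <;> grind

/-- No four pairwise nonadjacent vertices of the last level, for which the parity of connecting
induced paths is well defined, carry an induced four-vertex path of the odd-connection graph. -/
theorem IsLevelling.no_P4 (hlev : IsLevelling G k L)
    (hparent : ∀ i, 1 ≤ i → i < k → ∀ u ∈ L i, ∀ v ∈ L i, G.Adj u v →
      ∀ w ∈ L (i - 1), (G.Adj w u ↔ G.Adj w v))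
    {a b c d : V} (hmem : ∀ u ∈ ({a, b, c, d} : Set V), u ∈ L k)
    (hstable : ∀ u ∈ ({a, b, c, d} : Set V), ∀ v ∈ ({a, b, c, d} : Set V), ¬ G.Adj u v)
    (hparity : ∀ u ∈ ({a, b, c, d} : Set V), ∀ v ∈ ({a, b, c, d} : Set V),
      OddConn G L k u v → ¬ EvenConn G L k u v)
    (nac : a ≠ c) (nad : a ≠ d) (nbd : b ≠ d)
    (hab : OddConn G L k a b) (hbc : OddConn G L k b c) (hcd : OddConn G L k c d)
    (hac : ¬ OddConn G L k a c) (had : ¬ OddConn G L k a d) (hbd : ¬ OddConn G L k b d) :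
    False := by
  induction k generalizing a b c d with
  | zero =>
    obtain ⟨r, hr⟩ := hlev.2.1
    rw [hr] at hmem
    exact nac ((hmem a (by simp)).trans (hmem c (by simp)).symm)
  | succ k ih =>
    have hlev' := hlev.mono (Nat.le_succ k)
    have hex : ∀ u ∈ ({a, b, c, d} : Set V), ∃ x, x ∈ L k ∧ G.Adj x u := fun u hu =>
      (hlev.2.2 (k + 1) (by omega) le_rfl u (hmem u hu)).1
    have hprivate : ∀ u ∈ ({a, b, c, d} : Set V), ∀ v ∈ ({a, b, c, d} : Set V), ∀ x y,
        (x ∈ L k ∧ G.Adj x u) → (y ∈ L k ∧ G.Adj y v) → ¬ (x ∈ L k ∧ G.Adj x v) →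
        ¬ (y ∈ L k ∧ G.Adj y u) → (OddConn G L (k + 1) u v ↔ OddConn G L k x y) := by
      rintro u hu v hv x y ⟨hx, hxu⟩ ⟨hy, hyv⟩ hxv hyu
      have hxv' : ¬ G.Adj x v := fun e => hxv ⟨hx, e⟩
      have hyu' : ¬ G.Adj y u := fun e => hyu ⟨hy, e⟩
      have hne : u ≠ v := fun e => hxv' (e ▸ hxu)
      have hnexy : x ≠ y := fun e => hyu' (e ▸ hxu)
      refine ⟨fun ho => ?_, hlev.oddConn_succ (hmem u hu) (hmem v hv) hx hy hne
        (hstable u hu v hv) hxu hyv hxv' hyu'⟩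
      refine (hlev'.oddConn_or_evenConn hx hy hnexy).resolve_right fun he => ?_
      exact hparity u hu v hv ho (hlev.evenConn_succ (hmem u hu) (hmem v hv) hx hy hne
        (hstable u hu v hv) hxu hyv hxv' hyu' he)
    have hcommon : ∀ u ∈ ({a, b, c, d} : Set V), ∀ v ∈ ({a, b, c, d} : Set V), ∀ x,
        (x ∈ L k ∧ G.Adj x u) → (x ∈ L k ∧ G.Adj x v) → ¬ OddConn G L (k + 1) u v := by
      rintro u hu v hv x ⟨hx, hxu⟩ ⟨-, hxv⟩ ho
      exact hparity u hu v hv ho (evenConn_of_common_neighbor ho.1 (hstable u hu v hv)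
        (mem_lowerLevels.2 ⟨k, by omega, hx⟩) hxu.symm hxv)
    have hinj := no_common_parent_of_P4 (P := fun x u => x ∈ L k ∧ G.Adj x u)
      (fun u v => OddConn.symm) hcommon hprivate hex hab hbc hcd hac had hbd
    choose! f hf using hex
    have hfadj : ∀ u ∈ ({a, b, c, d} : Set V), ∀ v ∈ ({a, b, c, d} : Set V), u ≠ v →
        ¬ G.Adj (f u) v := fun u hu v hv hne e =>
      hne (hinj u hu v hv (f u) (hf u hu) ⟨(hf u hu).1, e⟩)
    have hfne : ∀ u ∈ ({a, b, c, d} : Set V), ∀ v ∈ ({a, b, c, d} : Set V), u ≠ v →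
        f u ≠ f v := fun u hu v hv hne e => hfadj u hu v hv hne (e ▸ (hf v hv).2)
    have hodd : ∀ u ∈ ({a, b, c, d} : Set V), ∀ v ∈ ({a, b, c, d} : Set V), u ≠ v →
        (OddConn G L (k + 1) u v ↔ OddConn G L k (f u) (f v)) := fun u hu v hv hne =>
      hprivate u hu v hv _ _ (hf u hu) (hf v hv) (fun e => hfadj u hu v hv hne e.2)
        (fun e => hfadj v hv u hu hne.symm e.2)
    have heven : ∀ u ∈ ({a, b, c, d} : Set V), ∀ v ∈ ({a, b, c, d} : Set V), u ≠ v →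
        OddConn G L k (f u) (f v) → ¬ EvenConn G L k (f u) (f v) := fun u hu v hv hne ho he =>
      hparity u hu v hv ((hodd u hu v hv hne).2 ho)
        (hlev.evenConn_succ (hmem u hu) (hmem v hv) (hf u hu).1 (hf v hv).1 hne
          (hstable u hu v hv) (hf u hu).2 (hf v hv).2 (hfadj u hu v hv hne)
          (hfadj v hv u hu hne.symm) he)
    have hedge : ∀ u ∈ ({a, b, c, d} : Set V), ∀ v ∈ ({a, b, c, d} : Set V),
        G.Adj (f u) (f v) → OddConn G L (k + 1) u v := fun u hu v hv e =>
      (hodd u hu v hv (fun h => e.ne (h ▸ rfl))).2 (oddConn_of_adj e)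
    have htwin : ∀ u ∈ ({a, b, c, d} : Set V), ∀ v ∈ ({a, b, c, d} : Set V),
        ∀ w ∈ ({a, b, c, d} : Set V), u ≠ v → u ≠ w → G.Adj (f v) (f w) →
        ¬ G.Adj (f u) (f v) → ¬ G.Adj (f u) (f w) →
        OddConn G L (k + 1) u v → OddConn G L (k + 1) u w := by
      intro u hu v hv w hw huv huw hvw h1 h2 ho
      rw [hodd u hu v hv huv] at ho
      rw [hodd u hu w hw huw]
      exact hlev'.oddConn_of_adj_of_same_parents (hf v hv).1 (hf w hw).1 hvw
        (fun hk => hparent k hk (by omega) _ (hf v hv).1 _ (hf w hw).1 hvw) h1 h2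
        (hfne u hu w hw huw) ho
    have ma : a ∈ ({a, b, c, d} : Set V) := by simp
    have mb : b ∈ ({a, b, c, d} : Set V) := by simp
    have mc : c ∈ ({a, b, c, d} : Set V) := by simp
    have md : d ∈ ({a, b, c, d} : Set V) := by simp
    have eac : ¬ G.Adj (f a) (f c) := fun e => hac (hedge a ma c mc e)
    have ead : ¬ G.Adj (f a) (f d) := fun e => had (hedge a ma d md e)
    have ebd : ¬ G.Adj (f b) (f d) := fun e => hbd (hedge b mb d md e)
    have hab_bc : G.Adj (f a) (f b) → G.Adj (f b) (f c) := fun e => by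
      by_contra h
      exact hac (htwin c mc b mb a ma hbc.1.symm nac.symm e.symm (fun e => h e.symm)
        (fun e => eac e.symm) hbc.symm).symm
    have hcd_bc : G.Adj (f c) (f d) → G.Adj (f b) (f c) := fun e => by
      by_contra h
      exact hbd (htwin b mb c mc d md hbc.1 nbd e h ebd hbc)
    have hbc_ab : G.Adj (f b) (f c) → G.Adj (f a) (f b) := fun e => by
      by_contra h
      exact hac (htwin a ma b mb c mc hab.1 nac e h eac hab)
    have hbc_cd : G.Adj (f b) (f c) → G.Adj (f c) (f d) := fun e => by
      by_contra h
      exact hbd (htwin d md c mc b mb hcd.1.symm nbd.symm e.symm (fun e => h e.symm)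
        (fun e => ebd e.symm) hcd.symm).symm
    have ebc : ¬ G.Adj (f b) (f c) := fun e => by
      have hlow : ∀ u ∈ ({a, b, c, d} : Set V), f u ∈ lowerLevels L (k + 1) := fun u hu =>
        mem_lowerLevels.2 ⟨k, by omega, (hf u hu).1⟩
      exact had (oddConn_of_induced_P6 (hf a ma).2.symm (hbc_ab e) e (hbc_cd e) (hf d md).2
        (fun e => hfadj b mb a ma hab.1.symm e.symm) (fun e => hfadj c mc a ma nac.symm e.symm)
        (fun e => hfadj d md a ma nad.symm e.symm) (hstable a ma d md) eac ead
        (hfadj a ma d md nad) ebd (hfadj b mb d md nbd) (hfadj c mc d md hcd.1) nad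
        ⟨hlow a ma, hlow b mb, hlow c mc, hlow d md⟩)
    have eab : ¬ G.Adj (f a) (f b) := fun e => ebc (hab_bc e)
    have ecd : ¬ G.Adj (f c) (f d) := fun e => ebc (hcd_bc e)
    have himage : ({f a, f b, f c, f d} : Set V) = Set.image f {a, b, c, d} := by
      simp [Set.image_insert_eq]
    refine ih hlev' (fun i hi hik => hparent i hi (by omega)) (a := f a) (b := f b) (c := f c)
      (d := f d) ?_ ?_ ?_ (hfne a ma c mc nac) (hfne a ma d md nad) (hfne b mb d md nbd)
      ((hodd a ma b mb hab.1).1 hab) ((hodd b mb c mc hbc.1).1 hbc) ((hodd c mc d md hcd.1).1 hcd)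
      (fun h => hac ((hodd a ma c mc nac).2 h)) (fun h => had ((hodd a ma d md nad).2 h))
      (fun h => hbd ((hodd b mb d md nbd).2 h))
    · rw [himage]
      rintro _ ⟨u, hu, rfl⟩
      exact (hf u hu).1
    · simp only [Set.mem_insert_iff, Set.mem_singleton_iff, forall_eq_or_imp, forall_eq]
      simp [eab, ebc, ecd, eac, ead, ebd, G.adj_comm (f b) (f a), G.adj_comm (f c) (f a),
        G.adj_comm (f d) (f a), G.adj_comm (f c) (f b), G.adj_comm (f d) (f b),
        G.adj_comm (f d) (f c)]
    · rw [himage]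
      rintro _ ⟨u, hu, rfl⟩ _ ⟨v, hv, rfl⟩ ho
      exact heven u hu v hv (fun h => ho.1 (h ▸ rfl)) ho

end InducedPaths

theorem stmt5 [Fintype V] (G : SimpleGraph V) (k : ℕ) (L : ℕ → Set V)
    (hlev : IsLevelling G k L)
    (hstable : ∀ x ∈ L k, ∀ y ∈ L k, ¬ G.Adj x y)
    (hparity : ∀ u ∈ L k, ∀ v ∈ L k, ∀ p q : G.Walk u v,
       IsInducedPath G p → InteriorIn G p (lowerLevels L k) →
       IsInducedPath G q → InteriorIn G q (lowerLevels L k) →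
       (Odd p.length ↔ Odd q.length))
    (hparent : ∀ i, 1 ≤ i → i ≤ k - 1 → ∀ u ∈ L i, ∀ v ∈ L i, G.Adj u v →
       ∀ w ∈ L (i - 1), (G.Adj w u ↔ G.Adj w v))
    (H : SimpleGraph V)
    (hH : ∀ u v, H.Adj u v ↔ (u ∈ L k ∧ v ∈ L k ∧ OddConn G L k u v)) :
    IsCograph H := by
  rintro ⟨a, b, c, d, nac, nad, nbd, hab, hbc, hcd, hac, had, hbd⟩
  have hmem : ∀ u ∈ ({a, b, c, d} : Set V), u ∈ L k := by
    rintro u (rfl | rfl | rfl | rfl)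
    · exact ((hH _ _).1 hab).1
    · exact ((hH _ _).1 hbc).1
    · exact ((hH _ _).1 hcd).1
    · exact ((hH _ _).1 hcd).2.1
  refine hlev.no_P4 (fun i hi hik => hparent i hi (by omega)) hmem
    (fun u hu v hv => hstable u (hmem u hu) v (hmem v hv)) ?_ nac nad nbd
    ((hH _ _).1 hab).2.2 ((hH _ _).1 hbc).2.2 ((hH _ _).1 hcd).2.2
    (fun h => hac ((hH _ _).2 ⟨hmem a (by simp), hmem c (by simp), h⟩))
    (fun h => had ((hH _ _).2 ⟨hmem a (by simp), hmem d (by simp), h⟩))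
    (fun h => hbd ((hH _ _).2 ⟨hmem b (by simp), hmem d (by simp), h⟩))
  rintro u hu v hv ⟨-, p, hp, hpo, hpi⟩ ⟨-, q, hq, hqe, hqi⟩
  exact Nat.not_odd_iff_even.2 hqe
    ((hparity u (hmem u hu) v (hmem v hv) p q hp hpi hq hqi).1 hpo)
end

section
/- Let G be a graph with no odd induced cycle of length greater than 2ℓ+1 (i.e., odd hole number at most 2ℓ+1), and let (L0, …, Lk) be a levelling in G. Then there exists a levelling (M0, …, Mk) in G such that χ(G[Mk]) ≥ χ(G[Lk])/(3ℓ+3), and for all 1 ≤ i ≤ k − max(2, ℓ), any two adjacent vertices of Mi have the same set of neighbours in M(i−1). -/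
open SimpleGraph

universe u

variable {V : Type u}

/-- `IndPath G S u v n`: the set `S` is the vertex set of an induced path of `G` with ends
`u`, `v` and with `n` edges. -/
inductive IndPath (G : SimpleGraph V) : Set V → V → V → ℕ → Prop
  | single (v : V) : IndPath G {v} v v 0
  | cons {S : Set V} {u v w : V} {n : ℕ} (hS : IndPath G S v w n) (huv : G.Adj u v)
      (hu : u ∉ S) (hadj : ∀ x ∈ S, G.Adj u x → x = v) : IndPath G (insert u S) u w (n + 1)

namespace IndPath

variable {G : SimpleGraph V} {S T : Set V} {u v w x : V} {n m : ℕ}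

theorem left_mem (h : IndPath G S u v n) : u ∈ S := by
  cases h <;> simp

theorem right_mem (h : IndPath G S u v n) : v ∈ S := by
  induction h with
  | single => simp
  | cons _ _ _ _ ih => exact Or.inr ih

theorem ne (h : IndPath G S u v n) (hn : 1 ≤ n) : u ≠ v := by
  cases h with
  | single => omega
  | cons hS _ hu _ => exact fun e => hu (e ▸ hS.right_mem)

theorem append {v' : V} (hS : IndPath G S u v n) (hT : IndPath G T v' w m)
    (hvv : G.Adj v v') (hd : ∀ x ∈ S, x ∉ T)
    (hadj : ∀ x ∈ S, ∀ y ∈ T, G.Adj x y → x = v ∧ y = v') :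
    IndPath G (S ∪ T) u w (n + 1 + m) := by
  induction hS with
  | single a =>
    have := IndPath.cons hT hvv (hd a rfl) (fun x hx h => (hadj a rfl x hx h).2)
    rw [← Set.insert_eq]
    simpa [Nat.add_comm] using this
  | @cons S a b c n hS hab ha hadj' ih =>
    have h1 := ih hvv (fun x hx => hd x (Or.inr hx)) (fun x hx => hadj x (Or.inr hx))
    have := IndPath.cons h1 hab (by
      rintro (h | h)
      · exact ha h
      · exact hd a (Or.inl rfl) h) (by
      rintro x (h | h) hx
      · exact hadj' x h hx
      · have := (hadj a (Or.inl rfl) x h hx).1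
        exact absurd (this ▸ hS.right_mem) ha)
    rw [Set.insert_union]
    convert this using 1
    omega

theorem symm (h : IndPath G S u v n) : IndPath G S v u n := by
  induction h with
  | single a => exact single a
  | @cons S a b c n hS hab ha hadj ih =>
    have := ih.append (single a) hab.symm (fun x hx hxa => ha (hxa ▸ hx)) (by
      rintro x hx y rfl hxy
      exact ⟨hadj x hx hxy.symm, rfl⟩)
    rw [Set.union_singleton] at this
    simpa using this

theorem exists_walk (h : IndPath G S u v n) :
    ∃ p : G.Walk u v, p.IsPath ∧ IsInducedWalk G p ∧ p.length = n ∧ ∀ x, x ∈ p.support ↔ x ∈ S := by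
  induction h with
  | single a => exact ⟨Walk.nil, by simp, by simp [IsInducedWalk], rfl, by simp⟩
  | @cons S a b c n hS hab ha hadj ih =>
    obtain ⟨p, hp, hi, hl, hs⟩ := ih
    refine ⟨Walk.cons hab p, ?_, ?_, by simp [hl], by simp [hs]⟩
    · rw [Walk.cons_isPath_iff, hs]; exact ⟨hp, ha⟩
    · intro x hx y hy hxy
      simp only [Walk.support_cons, List.mem_cons, hs] at hx hy
      simp only [Walk.toSubgraph, Subgraph.sup_adj, subgraphOfAdj_adj]
      rcases hx with rfl | hx <;> rcases hy with rfl | hy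
      · exact absurd hxy (G.irrefl)
      · exact Or.inl (by rw [hadj y hy hxy])
      · exact Or.inl (by rw [hadj x hx hxy.symm, Sym2.eq_swap])
      · exact Or.inr (hi x ((hs x).2 hx) y ((hs y).2 hy) hxy)

theorem exists_cycle_of_vertex (h : IndPath G S u v n) (hn : 1 ≤ n) (hx : x ∉ S)
    (hxu : G.Adj x u) (hxv : G.Adj x v) (hadj : ∀ y ∈ S, G.Adj x y → y = u ∨ y = v) :
    ∃ p : G.Walk x x, p.IsCycle ∧ IsInducedWalk G p ∧ p.length = n + 2 := by
  obtain ⟨p, hp, hi, hl, hs⟩ := h.exists_walk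
  refine ⟨Walk.cons hxu (p.concat hxv.symm), ?_, ?_, by simp [hl]⟩
  · rw [Walk.cons_isCycle_iff]
    refine ⟨by rw [Walk.concat_isPath_iff, hs]; exact ⟨hp, hx⟩, ?_⟩
    simp only [Walk.edges_concat, List.concat_eq_append, List.mem_append, List.mem_singleton]
    rintro (h1 | h1)
    · exact hx ((hs x).1 (p.fst_mem_support_of_mem_edges h1))
    · rw [Sym2.eq_swap] at h1
      have := h.ne hn
      simp only [Sym2.eq_iff] at h1
      rcases h1 with h1 | h1
      · exact this h1.1
      · exact hx (h1.1 ▸ h.left_mem)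
  · intro a ha b hb hab
    simp only [Walk.concat_eq_append, Walk.support_cons, Walk.mem_support_append_iff, hs,
      Walk.support_nil, List.mem_cons, List.not_mem_nil, or_false] at ha hb
    simp only [Walk.concat_eq_append, Walk.toSubgraph, Walk.toSubgraph_append, Subgraph.sup_adj,
      subgraphOfAdj_adj, singletonSubgraph_adj]
    have hvS := h.right_mem
    have ha' : a = x ∨ a ∈ S := by rcases ha with h | h | h | h <;> simp_all
    have hb' : b = x ∨ b ∈ S := by rcases hb with h | h | h | h <;> simp_all
    rcases ha' with rfl | ha' <;> rcases hb' with rfl | hb'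
    · exact absurd hab G.irrefl
    · rcases hadj b hb' hab with rfl | rfl
      · exact Or.inl rfl
      · exact Or.inr (Or.inr (Or.inl Sym2.eq_swap))
    · rcases hadj a ha' hab.symm with rfl | rfl
      · exact Or.inl Sym2.eq_swap
      · exact Or.inr (Or.inr (Or.inl rfl))
    · exact Or.inr (Or.inl (hi a ((hs a).2 ha') b ((hs b).2 hb') hab))

theorem exists_cycle {u' v' : V} (hS : IndPath G S u v n) (hT : IndPath G T u' v' m)
    (hn : 1 ≤ n) (huu : G.Adj u' u) (hvv : G.Adj v' v) (hd : ∀ x ∈ S, x ∉ T)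
    (hadj : ∀ x ∈ S, ∀ y ∈ T, G.Adj y x → x = u ∧ y = u' ∨ x = v ∧ y = v') :
    ∃ (x : V) (p : G.Walk x x), p.IsCycle ∧ IsInducedWalk G p ∧ p.length = n + m + 2 := by
  cases hT with
  | single a =>
    obtain ⟨p, hp⟩ := hS.exists_cycle_of_vertex hn (fun h => hd _ h rfl) huu hvv
      (fun y hy h => by rcases hadj y hy _ rfl h with h | h <;> simp [h.1])
    exact ⟨_, p, hp⟩
  | @cons T' _ b _ m hT hub hu hadj' =>
    have h1 := hS.append hT.symm hvv.symm (fun x hx hxT => hd x hx (Or.inr hxT)) (by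
      intro x hx y hy hxy
      rcases hadj x hx y (Or.inr hy) hxy.symm with h | h
      · exact absurd (h.2 ▸ hy) hu
      · exact h)
    obtain ⟨p, hp⟩ := h1.exists_cycle_of_vertex (x := u') (by omega) (by
      rintro (h | h)
      · exact hd _ h (Or.inl rfl)
      · exact hu h) huu hub (by
      rintro y (hy | hy) h
      · rcases hadj y hy u' (Or.inl rfl) h with h | h
        · exact Or.inl h.1
        · exact absurd (h.2 ▸ hT.right_mem) hu
      · exact Or.inr (hadj' y hy h))
    exact ⟨_, p, hp.1, hp.2.1, by rw [hp.2.2]; omega⟩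

end IndPath

namespace IndPath

variable {G : SimpleGraph V} {S T C : Set V} {u v w x : V} {n m : ℕ}

theorem exists_suffix (h : IndPath G S u v n) (hx : x ∈ S) :
    ∃ T ⊆ S, ∃ m ≤ n, IndPath G T x v m ∧ (x ≠ u → m < n) := by
  induction h with
  | single a => exact ⟨{a}, subset_rfl, 0, le_rfl, by rw [hx]; exact single a, fun h => (h hx).elim⟩
  | @cons S a b c n hS hab ha hadj ih =>
    rcases hx with rfl | hx
    · exact ⟨_, subset_rfl, _, le_rfl, cons hS hab ha hadj, fun h => (h rfl).elim⟩
    · obtain ⟨T, hT, m, hm, h1, -⟩ := ih hx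
      exact ⟨T, hT.trans (Set.subset_insert _ _), m, by omega, h1, fun _ => by omega⟩

theorem exists_extend (h : IndPath G S v w n) (hx : x ∈ S) (hux : G.Adj u x) :
    ∃ T ⊆ insert u S, ∃ m, IndPath G T u w m := by
  induction h generalizing x with
  | single a =>
    obtain rfl : x = a := hx
    refine ⟨_, subset_rfl, _, cons (single x) hux hux.ne (fun y hy _ => hy)⟩
  | @cons S a b c n hS hab ha hadj ih =>
    by_cases h : ∃ y ∈ S, G.Adj u y
    · obtain ⟨y, hy, huy⟩ := h
      obtain ⟨T, hT, m, h1⟩ := ih hy huy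
      exact ⟨T, hT.trans (Set.insert_subset_insert (Set.subset_insert _ _)), m, h1⟩
    · push Not at h
      have hxa : x = a := by
        rcases hx with hx | hx
        · exact hx
        · exact absurd hux (h x hx)
      subst hxa
      by_cases hu : u ∈ S
      · obtain ⟨T, hT, m, -, h1, -⟩ := hS.exists_suffix hu
        exact ⟨T, fun z hz => Or.inr (Or.inr (hT hz)), m, h1⟩
      · refine ⟨_, subset_rfl, _, cons (cons hS hab ha hadj) hux ?_ ?_⟩
        · rintro (h1 | h1)
          · exact hux.ne h1
          · exact hu h1
        · rintro y (h1 | h1) h2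
          · exact h1
          · exact absurd h2 (h y h1)

theorem exists_of_walk {a b : C} (p : (G.induce C).Walk a b) :
    ∃ T ⊆ C, ∃ m, IndPath G T a b m := by
  induction p with
  | nil => exact ⟨_, by simp, 0, single _⟩
  | @cons a b c h p ih =>
    obtain ⟨T, hT, m, hp⟩ := ih
    have hab : G.Adj (a : V) b := h
    obtain ⟨T', hT', m', hp'⟩ := hp.exists_extend hp.left_mem hab
    exact ⟨T', hT'.trans (Set.insert_subset a.2 hT), m', hp'⟩

/-- Two vertices with neighbours in a connected set `C` are joined by an induced path through
`C`; the interior of that path is `T`. -/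
theorem exists_between (hC : (G.induce C).Preconnected) (hu : ∃ x ∈ C, G.Adj u x)
    (hv : ∃ x ∈ C, G.Adj v x) :
    ∃ T ⊆ C, ∃ p q m, IndPath G T p q m ∧ G.Adj u p ∧ G.Adj v q ∧
      (∀ z ∈ T, G.Adj u z → z = p) ∧ ∀ z ∈ T, G.Adj v z → z = q := by
  have hex : ∃ m, ∃ T ⊆ C, ∃ p q, IndPath G T p q m ∧ G.Adj u p ∧ G.Adj v q := by
    obtain ⟨a, ha, hua⟩ := hu
    obtain ⟨b, hb, hvb⟩ := hv
    obtain ⟨p⟩ := hC ⟨a, ha⟩ ⟨b, hb⟩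
    obtain ⟨T, hT, m, hp⟩ := exists_of_walk p
    exact ⟨m, T, hT, a, b, hp, hua, hvb⟩
  classical
  obtain ⟨T, hT, p, q, hp, hup, hvq⟩ := Nat.find_spec hex
  have hmin := fun m => Nat.find_min hex (m := m)
  refine ⟨T, hT, p, q, _, hp, hup, hvq, fun z hz huz => ?_, fun z hz hvz => ?_⟩
  · by_contra hne
    obtain ⟨T', hT', m, -, hp', hlt⟩ := hp.exists_suffix hz
    exact hmin m (hlt hne) ⟨T', hT'.trans hT, z, q, hp', huz, hvq⟩
  · by_contra hne
    obtain ⟨T', hT', m, -, hp', hlt⟩ := hp.symm.exists_suffix hz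
    exact hmin m (hlt hne) ⟨T', hT'.trans hT, p, z, hp'.symm, hup, hvz⟩

end IndPath

/-- Every induced odd cycle of `G` has length at most `2 * l + 1`. -/
def OddHolesLE (G : SimpleGraph V) (l : ℕ) : Prop :=
  ∀ (v : V) (p : G.Walk v v), p.IsCycle → IsInducedWalk G p → Odd p.length → p.length ≤ 2 * l + 1

theorem OddHolesLE.not_odd {G : SimpleGraph V} {l : ℕ} (hG : OddHolesLE G l) {S T : Set V}
    {u v u' v' : V} {n m : ℕ} (hS : IndPath G S u v n) (hT : IndPath G T u' v' m)
    (hn : 1 ≤ n) (huu : G.Adj u' u) (hvv : G.Adj v' v) (hd : ∀ x ∈ S, x ∉ T)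
    (hadj : ∀ x ∈ S, ∀ y ∈ T, G.Adj y x → x = u ∧ y = u' ∨ x = v ∧ y = v')
    (hlen : 2 * l ≤ n + m) : ¬ Odd (n + m) := by
  intro hodd
  obtain ⟨x, p, h1, h2, h3⟩ := hS.exists_cycle hT hn huu hvv hd hadj
  have := hG x p h1 h2 (by rw [h3]; exact hodd.add_even even_two)
  omega

namespace IsLevelling

variable {G : SimpleGraph V} {k : ℕ} {L : ℕ → Set V} {i j : ℕ} {u v : V}

theorem index_eq (hL : IsLevelling G k L) (hi : i ≤ k) (hj : j ≤ k) (hu : u ∈ L i)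
    (hv : u ∈ L j) : i = j := by
  by_contra h
  exact Set.disjoint_left.1 (hL.1 i j hi hj h) hu hv

theorem le_succ (hL : IsLevelling G k L) (hj : j ≤ k) (hu : u ∈ L i)
    (hv : v ∈ L j) (h : G.Adj u v) : j ≤ i + 1 := by
  by_contra hc
  exact (hL.2.2 j (by omega) hj v hv).2 i (by omega) u hu h

theorem exists_parent (hL : IsLevelling G k L) (hj : j + 1 ≤ k) (hv : v ∈ L (j + 1)) :
    ∃ u ∈ L j, G.Adj u v := by
  simpa using (hL.2.2 (j + 1) (by omega) hj v hv).1

end IsLevelling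

/-- The vertices `x p, …, x q` form a path meeting the levels `E p, …, E q` in order. -/
structure IsLeg (G : SimpleGraph V) (E : ℕ → Set V) (x : ℕ → V) (p q : ℕ) : Prop where
  mem : ∀ j, p ≤ j → j ≤ q → x j ∈ E j
  adj : ∀ j, p ≤ j → j < q → G.Adj (x j) (x (j + 1))

namespace IsLeg

variable {G : SimpleGraph V} {k : ℕ} {L E : ℕ → Set V} {x : ℕ → V} {p q p' q' : ℕ}

theorem mono (h : IsLeg G E x p q) (hp : p ≤ p') (hq : q' ≤ q) : IsLeg G E x p' q' :=
  ⟨fun j h1 h2 => h.mem j (by omega) (by omega), fun j h1 h2 => h.adj j (by omega) (by omega)⟩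

theorem of_subset (h : IsLeg G E x p q) (hE : ∀ j ≤ q, E j ⊆ L j) : IsLeg G L x p q :=
  ⟨fun j h1 h2 => hE j h2 (h.mem j h1 h2), h.adj⟩

theorem single (h : x p ∈ E p) : IsLeg G E x p p :=
  ⟨fun j h1 h2 => by rwa [show j = p by omega], fun j h1 h2 => by omega⟩

/-- Glue the leg `x` on `p, …, r` to the leg `y` on `r + 1, …, q`. -/
theorem glue {r : ℕ} {y : ℕ → V} (hx : IsLeg G E x p r) (hy : IsLeg G E y (r + 1) q)
    (hxy : r < q → G.Adj (x r) (y (r + 1))) :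
    IsLeg G E (fun j => if j ≤ r then x j else y j) p q := by
  refine ⟨fun j h1 h2 => ?_, fun j h1 h2 => ?_⟩
  · by_cases h : j ≤ r
    · simpa [h] using hx.mem j h1 h
    · simpa [h] using hy.mem j (by omega) h2
  · rcases lt_trichotomy j r with h | rfl | h
    · simpa [h.le, Nat.succ_le_iff.2 h] using hx.adj j h1 h
    · simpa using hxy h2
    · simpa [h.not_ge, (show ¬ j + 1 ≤ r by omega)] using hy.adj j (by omega) h2

theorem indPath (hL : IsLevelling G k L) (h : IsLeg G L x p q) (hpq : p ≤ q) (hq : q ≤ k) :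
    IndPath G (x '' Set.Icc p q) (x p) (x q) (q - p) := by
  induction hpq using Nat.decreasingInduction with
  | self => simpa using IndPath.single (G := G) (x q)
  | of_succ r hr ih =>
    have h1 := ih (h.mono (by omega) le_rfl)
    have h2 := IndPath.cons h1 (h.adj r le_rfl hr) (by
      rintro ⟨j, ⟨hj1, hj2⟩, hj⟩
      have := hL.index_eq (by omega) (by omega) (h.mem j (by omega) hj2)
        (hj ▸ h.mem r le_rfl (by omega))
      omega) (by
      rintro _ ⟨j, ⟨hj1, hj2⟩, rfl⟩ hadj
      have := hL.le_succ (by omega) (h.mem r le_rfl (by omega)) (h.mem j (by omega) hj2) hadj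
      rw [show j = r + 1 by omega])
    rw [← Set.image_insert_eq, show q - (r + 1) + 1 = q - r by omega] at h2
    convert h2 using 2
    ext j
    simp only [Set.mem_Icc, Set.mem_insert_iff]
    omega

end IsLeg

theorem IsLevelling.path_parity {G : SimpleGraph V} {k l : ℕ} {L : ℕ → Set V}
    (hL : IsLevelling G k L) (hG : OddHolesLE G l) (hl : 1 ≤ l) (hk : 1 ≤ k)
    (hC : (G.induce (L k)).Preconnected)
    {u v : V} (hu : u ∈ L (k - 1)) (hv : v ∈ L (k - 1)) (hu' : ∃ x ∈ L k, G.Adj u x)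
    (hv' : ∃ x ∈ L k, G.Adj v x) {S₁ S₂ : Set V} {n₁ n₂ : ℕ} (h₁ : IndPath G S₁ u v n₁)
    (h₂ : IndPath G S₂ u v n₂) (hn₁ : 2 * l ≤ n₁) (hn₂ : 2 * l ≤ n₂)
    (hS₁ : ∀ z ∈ S₁, z ≠ u → z ≠ v → ∃ j < k - 1, z ∈ L j)
    (hS₂ : ∀ z ∈ S₂, z ≠ u → z ≠ v → ∃ j < k - 1, z ∈ L j) : n₁ % 2 = n₂ % 2 := by
  obtain ⟨T, hT, p, q, m, hp, hup, hvq, hup', hvq'⟩ := IndPath.exists_between hC hu' hv'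
  have key : ∀ S n, IndPath G S u v n → 2 * l ≤ n →
      (∀ z ∈ S, z ≠ u → z ≠ v → ∃ j < k - 1, z ∈ L j) → ¬ Odd (n + m) := by
    intro S n hS hn hz
    refine hG.not_odd hS hp (by omega) hup.symm hvq.symm ?_ ?_ (by omega)
    · intro x hx hxT
      have : ∃ j < k, x ∈ L j := by
        by_cases h1 : x = u
        · exact ⟨k - 1, by omega, h1 ▸ hu⟩
        by_cases h2 : x = v
        · exact ⟨k - 1, by omega, h2 ▸ hv⟩
        obtain ⟨j, hj, hx⟩ := hz x hx h1 h2
        exact ⟨j, by omega, hx⟩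
      obtain ⟨j, hj, hxj⟩ := this
      have := hL.index_eq (by omega) le_rfl hxj (hT hxT)
      omega
    · intro x hx y hy hxy
      by_cases h1 : x = u
      · exact Or.inl ⟨h1, hup' y hy (h1 ▸ hxy.symm)⟩
      by_cases h2 : x = v
      · exact Or.inr ⟨h2, hvq' y hy (h2 ▸ hxy.symm)⟩
      obtain ⟨j, hj, hx⟩ := hz x hx h1 h2
      have := hL.le_succ le_rfl hx (hT hy) hxy.symm
      omega
  have k1 := key _ _ h₁ hn₁ hS₁
  have k2 := key _ _ h₂ hn₂ hS₂
  rw [Nat.odd_iff] at k1 k2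
  omega

/-- A path `c 0, …, c k` through the levels such that `c j` is the only neighbour of `c (j + 1)`
in the level `L j`. -/
structure IsSpine (G : SimpleGraph V) (k : ℕ) (L : ℕ → Set V) (c : ℕ → V) : Prop where
  mem : ∀ j ≤ k, c j ∈ L j
  adj : ∀ j < k, G.Adj (c j) (c (j + 1))
  dep : ∀ j < k, ∀ u ∈ L j, G.Adj u (c (j + 1)) → u = c j

theorem IsSpine.isLeg {G : SimpleGraph V} {k : ℕ} {L : ℕ → Set V} {c : ℕ → V}
    (hc : IsSpine G k L c) : IsLeg G L c 0 k :=
  ⟨fun j _ h => hc.mem j h, fun j _ h => hc.adj j h⟩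

/-- Sets `E j` of vertices off the spine `c`, hanging from the spine at the vertices satisfying
`att`: such a vertex of `E j` is adjacent to `c (j - δ)` and to no later vertex of the spine,
while the other vertices below the last level are not adjacent to the spine and have a neighbour
in the previous set. Each vertex has a dependent in the next set. -/
structure IsBranching (G : SimpleGraph V) (k : ℕ) (L : ℕ → Set V) (c : ℕ → V) (t δ : ℕ)
    (E : ℕ → Set V) (att : ℕ → V → Prop) : Prop where
  sub : ∀ j ≤ k, E j ⊆ L j
  ne : ∀ j < k, ∀ v ∈ E j, v ≠ c j
  zero : E 0 = ∅
  bound : ∀ j v, att j v → 1 ≤ j ∧ j < t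
  par : ∀ j < k, ∀ v ∈ E (j + 1), ¬ att (j + 1) v → ∃ u ∈ E j, G.Adj u v
  clean : ∀ j < k, ∀ v ∈ E j, ¬ att j v → ∀ h ≤ k, ¬ G.Adj (c h) v
  hit : ∀ j < k, ∀ v ∈ E j, att j v → G.Adj (c (j - δ)) v
  hit_eq : ∀ j < k, ∀ v ∈ E j, att j v → ∀ h ≤ k, j - δ ≤ h → G.Adj (c h) v → h = j - δ
  dep : ∀ j < k, ∀ u ∈ E j, ∃ w ∈ E (j + 1), ¬ att (j + 1) w ∧ G.Adj u w ∧
    ∀ u' ∈ E j, G.Adj u' w → u' = u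

namespace IsBranching

variable {G : SimpleGraph V} {k l : ℕ} {L : ℕ → Set V} {c : ℕ → V} {t δ : ℕ}
  {E : ℕ → Set V} {att : ℕ → V → Prop}

theorem exists_upLeg (hE : IsBranching G k L c t δ E att) {j : ℕ} (hj : j ≤ k) {v : V}
    (hv : v ∈ E j) : ∃ s ≤ j, ∃ x, IsLeg G E x s j ∧ x j = v ∧ att s (x s) ∧
      ∀ h, s < h → h ≤ j → ¬ att h (x h) := by
  induction j generalizing v with
  | zero => rw [hE.zero] at hv; exact hv.elim
  | succ j ih =>
    by_cases ha : att (j + 1) v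
    · exact ⟨j + 1, le_rfl, fun _ => v, IsLeg.single hv, rfl, ha, fun h _ _ => by omega⟩
    · obtain ⟨u, hu, huv⟩ := hE.par j (by omega) v hv ha
      obtain ⟨s, hs, x, hx, rfl, hxs, hx'⟩ := ih (by omega) hu
      refine ⟨s, by omega, _, hx.glue (y := fun _ => v) (IsLeg.single hv) (fun _ => huv),
        by simp, by simpa [hs] using hxs, fun h h1 h2 => ?_⟩
      by_cases h3 : h ≤ j
      · simpa [h3] using hx' h h1 h3
      · rw [show h = j + 1 by omega]
        simpa using ha

theorem exists_downLeg (hE : IsBranching G k L c t δ E att) {j : ℕ} (hj : j ≤ k) {u : V}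
    (hu : u ∈ E j) : ∃ y, IsLeg G E y j k ∧ y j = u ∧ (∀ h, j < h → h ≤ k → ¬ att h (y h)) ∧
      ∀ h, j ≤ h → h < k → ∀ u' ∈ E h, G.Adj u' (y (h + 1)) → u' = y h := by
  induction hj using Nat.decreasingInduction generalizing u with
  | self => exact ⟨fun _ => u, IsLeg.single hu, rfl, fun h _ _ => by omega, fun h _ _ => by omega⟩
  | of_succ j hj ih =>
    obtain ⟨w, hw, hwa, huw, hdep⟩ := hE.dep j hj u hu
    obtain ⟨y, hy, rfl, hya, hyd⟩ := ih hw
    refine ⟨_, (IsLeg.single (x := fun _ => u) hu).glue hy (fun _ => huw), by simp,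
      fun h h1 h2 => ?_, fun h h1 h2 => ?_⟩
    · simp only [h1.not_ge, if_false]
      rcases (Nat.succ_le_of_lt h1).eq_or_lt with rfl | h3
      · exact hwa
      · exact hya h h3 h2
    · simp only [(show ¬ h + 1 ≤ j by omega), if_false]
      rcases h1.eq_or_lt with rfl | h3
      · simpa using hdep
      · simpa [h3.not_ge] using hyd h h3 h2

theorem spine_ne (hL : IsLevelling G k L) (hc : IsSpine G k L c)
    (hE : IsBranching G k L c t δ E att) {h j : ℕ} (hh : h ≤ k) (hj : j < k) {v : V}
    (hv : v ∈ E j) : c h ≠ v := by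
  rintro rfl
  have := hL.index_eq hh hj.le (hc.mem h hh) (hE.sub j hj.le hv)
  subst this
  exact hE.ne h hj _ hv rfl

theorem spine_path (hL : IsLevelling G k L) (hc : IsSpine G k L c)
    (hE : IsBranching G k L c t δ E att) {s q : ℕ} {x : ℕ → V} (hx : IsLeg G E x s q)
    (hsq : s ≤ q) (hq : q < k) (hs : att s (x s)) (hx' : ∀ h, s < h → h ≤ q → ¬ att h (x h)) :
    IndPath G (c '' Set.Icc (s - δ) (k - 1) ∪ x '' Set.Icc s q) (c (k - 1)) (x q)
      (k - 1 - (s - δ) + 1 + (q - s)) := by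
  refine (((hc.isLeg.mono (Nat.zero_le _) (Nat.sub_le k 1)).indPath hL
    (show s - δ ≤ k - 1 by omega) (by omega)).symm).append
    ((hx.of_subset fun j hj => hE.sub j (by omega)).indPath hL hsq hq.le)
    (hE.hit s (by omega) _ (hx.mem s le_rfl hsq) hs) ?_ ?_
  · rintro _ ⟨h, ⟨h1, h2⟩, rfl⟩ ⟨j, ⟨hj1, hj2⟩, he⟩
    exact hE.spine_ne hL hc (by omega) (by omega) (hx.mem j hj1 hj2) he.symm
  · rintro _ ⟨h, ⟨h1, h2⟩, rfl⟩ _ ⟨j, ⟨hj1, hj2⟩, rfl⟩ hadj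
    rcases hj1.eq_or_lt with rfl | hj
    · rw [hE.hit_eq s (by omega) _ (hx.mem s le_rfl hsq) hs h (by omega) h1 hadj]
      exact ⟨rfl, rfl⟩
    · exact absurd hadj
        (hE.clean j (by omega) _ (hx.mem j hj.le hj2) (hx' j hj hj2) h (by omega))

/-- The key parity obstruction: a leg `b` hanging from the spine cannot be joined by an induced
path to a leg `y` through a horizontal edge. -/
theorem not_horizontal (hL : IsLevelling G k L) (hG : OddHolesLE G l) (hl : 1 ≤ l)
    (hC : (G.induce (L k)).Preconnected) (hc : IsSpine G k L c)
    (hE : IsBranching G k L c (k - l) δ E att) {s i : ℕ} {b y : ℕ → V} (hsi : s ≤ i)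
    (hik : i + 2 ≤ k) (hδ : δ ≤ 1) (hb : IsLeg G E b s i) (hs : att s (b s))
    (hb' : ∀ h, s < h → h ≤ i → ¬ att h (b h)) (hy : IsLeg G E y i (k - 1))
    (hy' : ∀ h, i ≤ h → h ≤ k - 1 → ¬ att h (y h)) (h₁ : s < i → ¬ G.Adj (b (i - 1)) (y i))
    (h₂ : ¬ G.Adj (b i) (y (i + 1))) : ¬ G.Adj (b i) (y i) := by
  intro hby
  have hyk := hy.mem (k - 1) (by omega) le_rfl
  have hyL := hy.of_subset (L := L) fun j hj => hE.sub j (by omega)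
  have hbL := hb.of_subset (L := L) fun j hj => hE.sub j (by omega)
  obtain ⟨r, hr, x, hx, hxy, hxa, hx'⟩ := hE.exists_upLeg (by omega) hyk
  have p₁ := hE.spine_path hL hc hx hr (by omega) hxa hx'
  rw [hxy] at p₁
  have p₂ := (hE.spine_path hL hc hb hsi (by omega) hs hb').append
    (hyL.indPath hL (show i ≤ k - 1 by omega) (by omega)) hby (by
      rintro _ (⟨h, ⟨h1, h2⟩, rfl⟩ | ⟨h, ⟨h1, h2⟩, rfl⟩) ⟨j, ⟨hj1, hj2⟩, he⟩
      · exact hE.spine_ne hL hc (by omega) (by omega) (hy.mem j hj1 hj2) he.symm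
      · have := hL.index_eq (by omega) (by omega) (hbL.mem h h1 h2) (he ▸ hyL.mem j hj1 hj2)
        obtain rfl : h = i := by omega
        subst this
        exact hby.ne he.symm) (by
      rintro _ (⟨h, ⟨h1, h2⟩, rfl⟩ | ⟨h, ⟨h1, h2⟩, rfl⟩) _ ⟨j, ⟨hj1, hj2⟩, rfl⟩ hadj
      · exact absurd hadj (hE.clean j (by omega) _ (hy.mem j hj1 hj2) (hy' j hj1 hj2) h (by omega))
      · have := hL.le_succ (by omega) (hbL.mem h h1 h2) (hyL.mem j hj1 hj2) hadj
        by_cases hhi : h = i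
        · subst hhi
          by_cases hji : j = h
          · exact ⟨rfl, by rw [hji]⟩
          · rw [show j = h + 1 by omega] at hadj
            exact absurd hadj h₂
        · have h3 : j = i := by omega
          have h4 : h = i - 1 := by omega
          rw [h3, h4] at hadj
          exact absurd hadj (h₁ (by omega)))
  have hs1 := hE.bound s _ hs
  have hr1 := hE.bound r _ hxa
  have := hL.path_parity hG hl (by omega) hC (hc.mem _ (by omega))
    (hyL.mem _ (by omega) le_rfl)
    ⟨c k, hc.mem k le_rfl, by simpa [show k - 1 + 1 = k by omega] using hc.adj (k - 1) (by omega)⟩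
    (by
      obtain ⟨w, hw, -, hyw, -⟩ := hE.dep (k - 1) (by omega) _ hyk
      rw [show k - 1 + 1 = k by omega] at hw
      exact ⟨w, hE.sub k le_rfl hw, hyw⟩) p₁ p₂ (by omega) (by omega) (by
      rintro _ (⟨h, ⟨h1, h2⟩, rfl⟩ | ⟨h, ⟨h1, h2⟩, rfl⟩) hz1 hz2
      · have : h ≠ k - 1 := by rintro rfl; exact hz1 rfl
        exact ⟨h, by omega, hc.mem h (by omega)⟩
      · have : h ≠ k - 1 := by rintro rfl; exact hz2 hxy
        exact ⟨h, by omega, hE.sub h (by omega) (hx.mem h h1 h2)⟩) (by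
      rintro _ ((⟨h, ⟨h1, h2⟩, rfl⟩ | ⟨h, ⟨h1, h2⟩, rfl⟩) | ⟨h, ⟨h1, h2⟩, rfl⟩) hz1 hz2
      · have : h ≠ k - 1 := by rintro rfl; exact hz1 rfl
        exact ⟨h, by omega, hc.mem h (by omega)⟩
      · exact ⟨h, by omega, hbL.mem h h1 h2⟩
      · have : h ≠ k - 1 := by rintro rfl; exact hz2 rfl
        exact ⟨h, by omega, hyL.mem h h1 h2⟩)
  omega

end IsBranching

namespace IsBranching

variable {G : SimpleGraph V} {k l : ℕ} {L : ℕ → Set V} {c : ℕ → V} {t δ : ℕ}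
  {E : ℕ → Set V} {att : ℕ → V → Prop}

theorem exists_leg (hE : IsBranching G k L c t δ E att) {j : ℕ} (hj : j ≤ k) {v : V}
    (hv : v ∈ E j) : ∃ s ≤ j, ∃ x, IsLeg G E x s k ∧ x j = v ∧ att s (x s) ∧
      (∀ h, s < h → h ≤ k → ¬ att h (x h)) ∧
      ∀ h, j ≤ h → h < k → ∀ u' ∈ E h, G.Adj u' (x (h + 1)) → u' = x h := by
  obtain ⟨s, hs, x, hx, hxj, hxs, hx'⟩ := hE.exists_upLeg hj hv
  obtain ⟨y, hy, hyj, hya, hyd⟩ := hE.exists_downLeg hj hv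
  refine ⟨s, hs, _, hx.glue (hy.mono (by omega) le_rfl) (fun h => ?_), by simpa using hxj,
    by simpa [hs] using hxs, fun h h1 h2 => ?_, fun h h1 h2 => ?_⟩
  · rw [hxj, ← hyj]
    exact hy.adj j le_rfl h
  · by_cases h3 : h ≤ j
    · simpa [h3] using hx' h h1 h3
    · simpa [h3] using hya h (by omega) h2
  · have h3 : (if h ≤ j then x h else y h) = y h := by
      split_ifs with h4
      · rw [show h = j by omega, hxj, hyj]
      · rfl
    simp only [(show ¬ h + 1 ≤ j by omega), if_false, h3]
    exact hyd h h1 h2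

theorem att_of_adj (hL : IsLevelling G k L) (hG : OddHolesLE G l) (hl : 1 ≤ l)
    (hC : (G.induce (L k)).Preconnected) (hc : IsSpine G k L c)
    (hE : IsBranching G k L c (k - l) δ E att) (hδ : δ ≤ 1) {i : ℕ} (hik : i + 2 ≤ k) {x y : V}
    (hx : x ∈ E i) (hy : y ∈ E i) (hxy : G.Adj x y) (hxa : att i x) : att i y := by
  by_contra hya
  obtain ⟨Y, hY, rfl, hYa, hYd⟩ := hE.exists_downLeg (by omega) hy
  refine hE.not_horizontal hL hG hl hC hc (b := fun _ => x) le_rfl hik hδ (IsLeg.single hx) hxa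
    (fun h _ _ => by omega) (hY.mono le_rfl (Nat.sub_le k 1)) ?_ (fun h => by omega) ?_ hxy
  · intro h h1 h2
    rcases h1.eq_or_lt with rfl | h3
    · exact hya
    · exact hYa h h3 (by omega)
  · exact fun h => hxy.ne (hYd i le_rfl (by omega) x hx h)

theorem adj_of_not_att (hL : IsLevelling G k L) (hG : OddHolesLE G l) (hl : 1 ≤ l)
    (hC : (G.induce (L k)).Preconnected) (hc : IsSpine G k L c)
    (hE : IsBranching G k L c (k - l) δ E att) (hδ : δ ≤ 1) {j : ℕ} (hik : j + 3 ≤ k)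
    {a x y : V} (ha : a ∈ E j) (hx : x ∈ E (j + 1)) (hy : y ∈ E (j + 1)) (hxy : G.Adj x y)
    (hxa : ¬ att (j + 1) x) (hya : ¬ att (j + 1) y) (hax : G.Adj a x) : G.Adj a y := by
  by_contra hay
  obtain ⟨s, hs, b, hb, rfl, hbs, hb'⟩ := hE.exists_upLeg (by omega) ha
  obtain ⟨Y, hY, rfl, hYa, hYd⟩ := hE.exists_downLeg (by omega) hy
  refine hE.not_horizontal hL hG hl hC hc (s := s) (i := j + 1) (by omega) hik hδ
    (hb.glue (y := fun _ => x) (IsLeg.single hx) (fun _ => hax)) (by simpa [hs] using hbs)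
    (fun h h1 h2 => ?_) (hY.mono le_rfl (Nat.sub_le k 1)) ?_ (fun h => by simpa using hay) ?_
    (by simpa using hxy)
  · by_cases h3 : h ≤ j
    · simpa [h3] using hb' h h1 h3
    · rw [show h = j + 1 by omega]
      simpa using hxa
  · intro h h1 h2
    rcases h1.eq_or_lt with rfl | h3
    · exact hya
    · exact hYa h h3 (by omega)
  · intro h
    simp only [Nat.not_succ_le_self, if_false] at h
    exact hxy.ne (hYd _ le_rfl (by omega) x hx h)

/-- When attached vertices see two consecutive spine vertices and occur only at levels far apart,
they have no neighbour in the previous set. -/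
theorem not_adj_of_att (hL : IsLevelling G k L) (hG : OddHolesLE G l)
    (hc : IsSpine G k L c) (hE : IsBranching G k L c t 0 E att) (htk : t ≤ k)
    (hgap : ∀ j v j' v', att j v → att j' v' → j < j' → j + l < j') {j : ℕ} {a x : V}
    (ha : a ∈ E j) (hx : x ∈ E (j + 1)) (hxa : att (j + 1) x) (hcx : G.Adj (c j) x) :
    ¬ G.Adj a x := by
  intro hax
  have hb := hE.bound _ _ hxa
  obtain ⟨s, hs, b, hb, rfl, hbs, hb'⟩ := hE.exists_upLeg (by omega) ha
  have hgap' := hgap _ _ _ _ hbs hxa (by omega)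
  have hbL := hb.of_subset (L := L) fun j hj => hE.sub j (by omega)
  have hxL := hE.sub _ (by omega) hx
  have p := (hbL.indPath hL hs (by omega)).symm.append
    ((hc.isLeg.mono (Nat.zero_le s) (show j ≤ k by omega)).indPath hL hs (by omega))
    (hE.hit s (by omega) _ (hb.mem s le_rfl hs) hbs).symm (by
      rintro _ ⟨h, ⟨h1, h2⟩, rfl⟩ ⟨i, ⟨hi1, hi2⟩, he⟩
      exact hE.spine_ne hL hc (by omega) (by omega) (hb.mem h h1 h2) he) (by
      rintro _ ⟨h, ⟨h1, h2⟩, rfl⟩ _ ⟨i, ⟨hi1, hi2⟩, rfl⟩ hadj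
      rcases h1.eq_or_lt with rfl | h3
      · rw [hE.hit_eq s (by omega) _ (hb.mem s le_rfl hs) hbs i (by omega) (by omega) hadj.symm]
        exact ⟨rfl, rfl⟩
      · exact absurd hadj.symm
          (hE.clean h (by omega) _ (hb.mem h h1 h2) (hb' h h3 h2) i (by omega)))
  refine hG.not_odd p (IndPath.single x) (by omega) hax.symm hcx.symm ?_ ?_ (by omega)
    ⟨j - s, by omega⟩
  · rintro z hz rfl
    have : ∃ h ≤ j, z ∈ L h := by
      rcases hz with ⟨h, ⟨h1, h2⟩, rfl⟩ | ⟨h, ⟨h1, h2⟩, rfl⟩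
      · exact ⟨h, h2, hbL.mem h h1 h2⟩
      · exact ⟨h, h2, hc.mem h (by omega)⟩
    obtain ⟨h, hh, hz⟩ := this
    have := hL.index_eq (by omega) (by omega) hz hxL
    omega
  · rintro _ (⟨h, ⟨h1, h2⟩, rfl⟩ | ⟨h, ⟨h1, h2⟩, rfl⟩) y rfl hadj
    · have := hL.le_succ (by omega) (hbL.mem h h1 h2) hxL hadj.symm
      rw [show h = j by omega]
      exact Or.inl ⟨rfl, rfl⟩
    · have := hL.le_succ (by omega) (hc.mem h (by omega)) hxL hadj.symm
      rw [show h = j by omega]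
      exact Or.inr ⟨rfl, rfl⟩

theorem two_leg_path (hL : IsLevelling G k L) (hc : IsSpine G k L c)
    (hE : IsBranching G k L c t δ E att)
    (hhit : ∀ j < k, ∀ v ∈ E j, att j v → ∀ h ≤ k, G.Adj (c h) v → h = j - δ)
    {s i q : ℕ} {x y : ℕ → V} (hsi : s ≤ i) (hsq : s ≤ q) (hqk : q < k) (hik : i < k)
    (hx : IsLeg G E x s q) (hxs : att s (x s)) (hx' : ∀ h, s < h → h ≤ q → ¬ att h (x h))
    (hy : IsLeg G E y i (k - 1)) (hyi : att i (y i))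
    (hy' : ∀ h, i < h → h ≤ k - 1 → ¬ att h (y h))
    (hxy : ∀ h j, s ≤ h → h ≤ q → i ≤ j → j ≤ k - 1 → x h ≠ y j ∧ ¬ G.Adj (x h) (y j)) :
    IndPath G (x '' Set.Icc s q ∪ c '' Set.Icc (s - δ) (i - δ) ∪ y '' Set.Icc i (k - 1))
      (x q) (y (k - 1)) (q - s + 1 + (i - δ - (s - δ)) + 1 + (k - 1 - i)) := by
  have hxL := hx.of_subset (L := L) fun j hj => hE.sub j (by omega)
  have hyL := hy.of_subset (L := L) fun j hj => hE.sub j (by omega)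
  refine ((hxL.indPath hL hsq (by omega)).symm.append
    ((hc.isLeg.mono (Nat.zero_le _) (show i - δ ≤ k by omega)).indPath hL
      (show s - δ ≤ i - δ by omega) (by omega))
    (hE.hit s (by omega) _ (hx.mem s le_rfl hsq) hxs).symm ?_ ?_).append
    (hyL.indPath hL (by omega) (by omega)) (hE.hit i hik _ (hy.mem i le_rfl (by omega)) hyi) ?_ ?_
  · rintro _ ⟨h, ⟨h1, h2⟩, rfl⟩ ⟨j, ⟨hj1, hj2⟩, he⟩
    exact hE.spine_ne hL hc (by omega) (by omega) (hx.mem h h1 h2) he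
  · rintro _ ⟨h, ⟨h1, h2⟩, rfl⟩ _ ⟨j, ⟨hj1, hj2⟩, rfl⟩ hadj
    rcases h1.eq_or_lt with rfl | h3
    · rw [hhit s (by omega) _ (hx.mem s le_rfl hsq) hxs j (by omega) hadj.symm]
      exact ⟨rfl, rfl⟩
    · exact absurd hadj.symm
        (hE.clean h (by omega) _ (hx.mem h h1 h2) (hx' h h3 h2) j (by omega))
  · rintro _ (⟨h, ⟨h1, h2⟩, rfl⟩ | ⟨h, ⟨h1, h2⟩, rfl⟩) ⟨j, ⟨hj1, hj2⟩, he⟩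
    · exact (hxy h j h1 h2 hj1 hj2).1 he.symm
    · exact hE.spine_ne hL hc (by omega) (by omega) (hy.mem j hj1 hj2) he.symm
  · rintro _ (⟨h, ⟨h1, h2⟩, rfl⟩ | ⟨h, ⟨h1, h2⟩, rfl⟩) _ ⟨j, ⟨hj1, hj2⟩, rfl⟩ hadj
    · exact absurd hadj (hxy h j h1 h2 hj1 hj2).2
    · rcases hj1.eq_or_lt with rfl | h3
      · rw [hhit i (by omega) _ (hy.mem i le_rfl hj2) hyi h (by omega) hadj]
        exact ⟨rfl, rfl⟩
      · exact absurd hadj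
          (hE.clean j (by omega) _ (hy.mem j hj1 hj2) (hy' j h3 hj2) h (by omega))

theorem adj_of_att (hL : IsLevelling G k L) (hG : OddHolesLE G l) (hl : 1 ≤ l)
    (hC : (G.induce (L k)).Preconnected) (hc : IsSpine G k L c)
    (hE : IsBranching G k L c (k - l) δ E att) (hδ : δ ≤ 1)
    (hhit : ∀ j < k, ∀ v ∈ E j, att j v → ∀ h ≤ k, G.Adj (c h) v → h = j - δ)
    {r : ℕ} (hik : r + 3 ≤ k) {a x y : V} (ha : a ∈ E r) (hx : x ∈ E (r + 1))
    (hy : y ∈ E (r + 1)) (hxy : G.Adj x y) (hxa : att (r + 1) x) (hya : att (r + 1) y)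
    (hax : G.Adj a x) : G.Adj a y := by
  by_contra hay
  obtain ⟨s, hs, A, hA, rfl, hAs, hA', hAd⟩ := hE.exists_leg (by omega) ha
  obtain ⟨Y, hY, rfl, hYa, hYd⟩ := hE.exists_downLeg (by omega) hy
  have hs1 := hE.bound _ _ hAs
  have hi1 := hE.bound _ _ hya
  have hAL := hA.of_subset (L := L) hE.sub
  have hYL := hY.of_subset (L := L) hE.sub
  have hxL := hE.sub _ (by omega) hx
  have hne : ∀ j, r + 1 ≤ j → j ≤ k → A j ≠ Y j := by
    intro j hj
    induction j, hj using Nat.le_induction with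
    | base =>
      intro hk he
      exact hA' (r + 1) (by omega) hk (he ▸ hya)
    | succ j hj ih =>
      intro hk he
      exact ih (by omega) (hYd j hj (by omega) _ (hA.mem j (by omega) (by omega))
        (he ▸ hA.adj j (by omega) (by omega)))
  have hAY : ∀ j, r + 1 ≤ j → j < k → ¬ G.Adj (A j) (Y (j + 1)) := fun j h1 h2 h =>
    hne j h1 h2.le (hYd j h1 h2 _ (hA.mem j (by omega) (by omega)) h)
  have hYA : ∀ j, r + 1 ≤ j → j < k → ¬ G.Adj (Y j) (A (j + 1)) := fun j h1 h2 h =>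
    hne j h1 h2.le (hAd j (by omega) h2 _ (hY.mem j (by omega) (by omega)) h).symm
  have hYY : ∀ j, r + 1 ≤ j → j + 2 ≤ k → ¬ G.Adj (Y j) (A j) := by
    intro j h1 h2
    refine hE.not_horizontal hL hG hl hC hc h1 h2 hδ (hY.mono le_rfl (by omega)) hya
      (fun h h3 h4 => hYa h h3 (by omega)) (hA.mono (by omega) (by omega))
      (fun h h3 h4 => hA' h (by omega) (by omega)) (fun h3 => ?_) (hYA j h1 (by omega))
    have := hYA (j - 1) (by omega) (by omega)
    rwa [show j - 1 + 1 = j by omega] at this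
  have hcross : ∀ h j, s ≤ h → h ≤ k - 1 → r + 1 ≤ j → j ≤ k - 1 → h + j < 2 * (k - 1) →
      A h ≠ Y j ∧ ¬ G.Adj (A h) (Y j) := by
    intro h j h1 h2 h3 h4 h5
    refine ⟨fun he => ?_, fun hadj => ?_⟩
    · have := hL.index_eq (by omega) (by omega) (hAL.mem h h1 (by omega))
        (he ▸ hYL.mem j h3 (by omega))
      subst this
      exact hne h h3 (by omega) he
    · have e1 := hL.le_succ (by omega) (hAL.mem h h1 (by omega)) (hYL.mem j h3 (by omega)) hadj
      have e2 := hL.le_succ (by omega) (hYL.mem j h3 (by omega)) (hAL.mem h h1 (by omega))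
        hadj.symm
      rcases lt_trichotomy h j with h6 | rfl | h6
      · obtain rfl : j = h + 1 := by omega
        by_cases h7 : h = r
        · exact hay (h7 ▸ hadj)
        · exact hAY h (by omega) (by omega) hadj
      · exact hYY h h3 (by omega) hadj.symm
      · obtain rfl : h = j + 1 := by omega
        exact hYA j h3 (by omega) hadj.symm
  by_cases hlast : G.Adj (A (k - 1)) (Y (k - 1))
  · have p := hE.two_leg_path hL hc hhit (s := s) (q := k - 2) (i := r + 1) (by omega) (by omega)
      (by omega) (by omega)
      (hA.mono le_rfl (by omega)) hAs (fun h h1 h2 => hA' h h1 (by omega))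
      (hY.mono le_rfl (by omega)) hya (fun h h1 h2 => hYa h h1 (by omega))
      (fun h j h1 h2 h3 h4 => hcross h j h1 (by omega) h3 h4 (by omega))
    refine hG.not_odd p (IndPath.single (A (k - 1))) (by omega) ?_ hlast ?_ ?_ (by omega)
      ⟨k - s - 1, by omega⟩
    · have := hA.adj (k - 2) (by omega) (by omega)
      rw [show k - 2 + 1 = k - 1 by omega] at this
      exact this.symm
    · rintro _ ((⟨h, ⟨h1, h2⟩, rfl⟩ | ⟨h, ⟨h1, h2⟩, rfl⟩) | ⟨h, ⟨h1, h2⟩, rfl⟩) he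
      · have := hL.index_eq (by omega) (by omega) (hAL.mem h h1 (by omega))
          (he ▸ hAL.mem (k - 1) (by omega) (by omega))
        omega
      · exact hE.spine_ne hL hc (by omega) (by omega) (hA.mem (k - 1) (by omega) (by omega)) he
      · have := hL.index_eq (by omega) (by omega) (hYL.mem h h1 (by omega))
          (he ▸ hAL.mem (k - 1) (by omega) (by omega))
        subst this
        exact hlast.ne he.symm
    · rintro _ ((⟨h, ⟨h1, h2⟩, rfl⟩ | ⟨h, ⟨h1, h2⟩, rfl⟩) | ⟨h, ⟨h1, h2⟩, rfl⟩) _ rfl hadj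
      · have := hL.le_succ (by omega) (hAL.mem h h1 (by omega))
          (hAL.mem (k - 1) (by omega) (by omega)) hadj.symm
        rw [show h = k - 2 by omega]
        exact Or.inl ⟨rfl, rfl⟩
      · exact absurd hadj.symm (hE.clean (k - 1) (by omega) _
          (hA.mem (k - 1) (by omega) (by omega)) (hA' _ (by omega) (by omega)) h (by omega))
      · by_cases h3 : h = k - 1
        · rw [h3]
          exact Or.inr ⟨rfl, rfl⟩
        · exact absurd hadj (hcross (k - 1) h (by omega) le_rfl h1 h2 (by omega)).2
  · have hcross' : ∀ h j, s ≤ h → h ≤ k - 1 → r + 1 ≤ j → j ≤ k - 1 →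
        A h ≠ Y j ∧ ¬ G.Adj (A h) (Y j) := by
      intro h j h1 h2 h3 h4
      by_cases h5 : h + j < 2 * (k - 1)
      · exact hcross h j h1 h2 h3 h4 h5
      · obtain rfl : h = k - 1 := by omega
        obtain rfl : j = k - 1 := by omega
        exact ⟨hne _ h3 (by omega), hlast⟩
    have p := hE.two_leg_path hL hc hhit (s := s) (q := k - 1) (i := r + 1) (by omega) (by omega)
      (by omega) (by omega)
      (hA.mono le_rfl (by omega)) hAs (fun h h1 h2 => hA' h h1 (by omega))
      (hY.mono le_rfl (by omega)) hya (fun h h1 h2 => hYa h h1 (by omega)) hcross'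
    have hAx : ∀ h, r ≤ h → h ≤ k - 1 → G.Adj (A h) x → h = r := by
      intro h h1 h2 hadj
      have e := hL.le_succ (by omega) hxL (hAL.mem h (by omega) (by omega)) hadj.symm
      by_contra h3
      by_cases h4 : h = r + 1
      · subst h4
        exact hA' _ (by omega) (by omega) (hE.att_of_adj hL hG hl hC hc hδ (by omega) hx
          (hA.mem _ (by omega) (by omega)) hadj.symm hxa)
      · rw [show h = r + 1 + 1 by omega] at hadj
        exact hA' _ (by omega) (by omega) (hAd _ (by omega) (by omega) x hx hadj.symm ▸ hxa)
    have hYx : ∀ h, r + 1 ≤ h → h ≤ k - 1 → G.Adj x (Y h) → h = r + 1 := by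
      intro h h1 h2 hadj
      have e := hL.le_succ (by omega) hxL (hYL.mem h (by omega) (by omega)) hadj
      by_contra h3
      rw [show h = r + 1 + 1 by omega] at hadj
      exact hxy.ne (hYd _ le_rfl (by omega) x hx hadj)
    have p' := (((hAL.mono hs (Nat.sub_le k 1)).indPath hL (by omega) (by omega)).symm.append
      (IndPath.single x) hax (by
        rintro _ ⟨h, ⟨h1, h2⟩, rfl⟩ he
        have he : A h = x := he
        have := hL.index_eq (by omega) (by omega) (hAL.mem h (by omega) (by omega)) (he ▸ hxL)
        subst this
        exact hA' _ (by omega) (by omega) (he ▸ hxa)) (by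
        rintro _ ⟨h, ⟨h1, h2⟩, rfl⟩ _ rfl hadj
        rw [hAx h h1 h2 hadj]
        exact ⟨rfl, rfl⟩)).append
      ((hYL.mono le_rfl (Nat.sub_le k 1)).indPath hL (by omega) (by omega)) hxy (by
        rintro _ (⟨h, ⟨h1, h2⟩, rfl⟩ | rfl) ⟨j, ⟨hj1, hj2⟩, he⟩
        · exact (hcross' h j (by omega) h2 hj1 hj2).1 he.symm
        · have := hL.index_eq (by omega) (by omega) (hYL.mem j (by omega) (by omega)) (he ▸ hxL)
          subst this
          exact hxy.ne he.symm) (by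
        rintro _ (⟨h, ⟨h1, h2⟩, rfl⟩ | rfl) _ ⟨j, ⟨hj1, hj2⟩, rfl⟩ hadj
        · exact absurd hadj (hcross' h j (by omega) h2 hj1 hj2).2
        · rw [hYx j hj1 hj2 hadj]
          exact ⟨rfl, rfl⟩)
    have hk1 : k - 1 + 1 = k := by omega
    have := hL.path_parity hG hl (by omega) hC (hAL.mem (k - 1) (by omega) (by omega))
      (hYL.mem (k - 1) (by omega) (by omega))
      ⟨A k, hAL.mem k (by omega) le_rfl, by
        have := hA.adj (k - 1) (by omega) (by omega)
        rwa [hk1] at this⟩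
      ⟨Y k, hYL.mem k (by omega) le_rfl, by
        have := hY.adj (k - 1) (by omega) (by omega)
        rwa [hk1] at this⟩ p p' (by omega) (by omega) (by
        rintro _ ((⟨h, ⟨h1, h2⟩, rfl⟩ | ⟨h, ⟨h1, h2⟩, rfl⟩) | ⟨h, ⟨h1, h2⟩, rfl⟩) hz1 hz2
        · have : h ≠ k - 1 := by rintro rfl; exact hz1 rfl
          exact ⟨h, by omega, hAL.mem h h1 (by omega)⟩
        · exact ⟨h, by omega, hc.mem h (by omega)⟩
        · have : h ≠ k - 1 := by rintro rfl; exact hz2 rfl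
          exact ⟨h, by omega, hYL.mem h h1 (by omega)⟩) (by
        rintro _ ((⟨h, ⟨h1, h2⟩, rfl⟩ | rfl) | ⟨h, ⟨h1, h2⟩, rfl⟩) hz1 hz2
        · have : h ≠ k - 1 := by rintro rfl; exact hz1 rfl
          exact ⟨h, by omega, hAL.mem h (by omega) (by omega)⟩
        · exact ⟨r + 1, by omega, hxL⟩
        · have : h ≠ k - 1 := by rintro rfl; exact hz2 rfl
          exact ⟨h, by omega, hYL.mem h h1 (by omega)⟩)
    omega

end IsBranching

/-- A minimal set of parents: each of its members is the only parent of some vertex of `W`. -/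
theorem exists_minimal_cover [Finite V] (G : SimpleGraph V) {X W : Set V}
    (h : ∀ w ∈ W, ∃ u ∈ X, G.Adj u w) :
    ∃ Y ⊆ X, (∀ w ∈ W, ∃ u ∈ Y, G.Adj u w) ∧
      ∀ u ∈ Y, ∃ w ∈ W, G.Adj u w ∧ ∀ u' ∈ Y, G.Adj u' w → u' = u := by
  obtain ⟨Y, -, hY⟩ := (Set.toFinite {Y | Y ⊆ X ∧ ∀ w ∈ W, ∃ u ∈ Y, G.Adj u w}).exists_le_minimal
    (a := X) ⟨subset_rfl, h⟩
  refine ⟨Y, hY.prop.1, hY.prop.2, fun u hu => ?_⟩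
  by_contra! hc
  have hmem : Y \ {u} ⊆ X ∧ ∀ w ∈ W, ∃ u' ∈ Y \ {u}, G.Adj u' w := by
    refine ⟨Set.sdiff_subset.trans hY.prop.1, fun w hw => ?_⟩
    by_cases huw : G.Adj u w
    · obtain ⟨u', hu', h1, h2⟩ := hc w hw huw
      exact ⟨u', ⟨hu', h2⟩, h1⟩
    · obtain ⟨u', hu', h1⟩ := hY.prop.2 w hw
      exact ⟨u', ⟨hu', fun he => huw (he ▸ h1)⟩, h1⟩
  exact (hY.le_of_le hmem Set.sdiff_subset hu).2 rfl

theorem exists_dependent_subsets [Finite V] (G : SimpleGraph V) {k : ℕ} {E : ℕ → Set V}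
    {att : ℕ → V → Prop}
    (hpar : ∀ j < k, ∀ v ∈ E (j + 1), ¬ att (j + 1) v → ∃ u ∈ E j, G.Adj u v) :
    ∃ F : ℕ → Set V, (∀ j, F j ⊆ E j) ∧ F k = E k ∧
      (∀ j < k, ∀ v ∈ F (j + 1), ¬ att (j + 1) v → ∃ u ∈ F j, G.Adj u v) ∧
      ∀ j < k, ∀ u ∈ F j, ∃ w ∈ F (j + 1), ¬ att (j + 1) w ∧ G.Adj u w ∧
        ∀ u' ∈ F j, G.Adj u' w → u' = u := by
  suffices H : ∀ i ≤ k, ∃ F : ℕ → Set V, (∀ j, F j ⊆ E j) ∧ F k = E k ∧ (∀ j < i, F j = E j) ∧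
      (∀ j < k, ∀ v ∈ F (j + 1), ¬ att (j + 1) v → ∃ u ∈ F j, G.Adj u v) ∧
      ∀ j, i ≤ j → j < k → ∀ u ∈ F j, ∃ w ∈ F (j + 1), ¬ att (j + 1) w ∧ G.Adj u w ∧
        ∀ u' ∈ F j, G.Adj u' w → u' = u by
    obtain ⟨F, h1, h2, -, h3, h4⟩ := H 0 (Nat.zero_le _)
    exact ⟨F, h1, h2, h3, fun j => h4 j (Nat.zero_le _)⟩
  intro i hi
  induction hi using Nat.decreasingInduction with
  | self => exact ⟨E, fun _ => subset_rfl, rfl, fun _ _ => rfl, hpar, fun j _ _ => by omega⟩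
  | of_succ i hi ih =>
    obtain ⟨F, h1, h2, h3, h4, h5⟩ := ih
    obtain ⟨Y, hY, hYW, hYd⟩ := exists_minimal_cover G (X := F i)
      (W := {w ∈ F (i + 1) | ¬ att (i + 1) w}) (fun w hw => h4 i hi w hw.1 hw.2)
    refine ⟨Function.update F i Y, fun j => ?_, ?_, fun j hj => ?_, fun j hj v hv hva => ?_,
      fun j hj hjk u hu => ?_⟩
    · by_cases hji : j = i
      · subst hji
        simpa using hY.trans (h1 j)
      · simpa [hji] using h1 j
    · simpa [hi.ne'] using h2
    · simpa [hj.ne] using h3 j (by omega)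
    · by_cases hji : j = i
      · subst hji
        simpa using hYW v ⟨by simpa using hv, hva⟩
      · have hv' : v ∈ F (j + 1) := by
          by_cases hji' : j + 1 = i
          · subst hji'
            exact hY (by simpa using hv)
          · simpa [hji'] using hv
        simpa [hji] using h4 j hj v hv' hva
    · rw [Function.update_of_ne (by omega : j + 1 ≠ i)]
      by_cases hji : j = i
      · subst hji
        simp only [Function.update_self] at hu ⊢
        obtain ⟨w, hw, huw⟩ := hYd u hu
        exact ⟨w, hw.1, hw.2, huw⟩
      · simp only [Function.update_of_ne hji] at hu ⊢
        exact h5 j (by omega) hjk u hu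

/-- Up to level `n`, adjacent vertices in the same level have the same parents. -/
def SameParents (G : SimpleGraph V) (n : ℕ) (M : ℕ → Set V) : Prop :=
  ∀ i, 1 ≤ i → i ≤ n → ∀ u ∈ M i, ∀ v ∈ M i, G.Adj u v →
    ∀ w ∈ M (i - 1), (G.Adj w u ↔ G.Adj w v)

/-- The set `A` lies in the last level of a levelling whose levels up to `n` satisfy
`SameParents`. -/
def IsGood (G : SimpleGraph V) (k n : ℕ) (A : Set V) : Prop :=
  ∃ M : ℕ → Set V, IsLevelling G k M ∧ SameParents G n M ∧ A ⊆ M k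

theorem SameParents.of_imp {G : SimpleGraph V} {n : ℕ} {M : ℕ → Set V}
    (h : ∀ i, i + 1 ≤ n → ∀ u ∈ M (i + 1), ∀ v ∈ M (i + 1), G.Adj u v →
      ∀ w ∈ M i, G.Adj w u → G.Adj w v) : SameParents G n M := by
  intro i hi hin u hu v hv huv w hw
  obtain ⟨i, rfl⟩ : ∃ j, i = j + 1 := ⟨i - 1, by omega⟩
  exact ⟨h i hin u hu v hv huv w hw, h i hin v hv u hu huv.symm w hw⟩

theorem IsBranching.isGood {G : SimpleGraph V} {k l : ℕ} {L : ℕ → Set V} {c : ℕ → V} {δ e n : ℕ}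
    {E : ℕ → Set V} {att : ℕ → V → Prop} (hL : IsLevelling G k L) (hG : OddHolesLE G l)
    (hl : 1 ≤ l) (hn : n ≤ k - 2) (hC : (G.induce (L k)).Preconnected)
    (hc : IsSpine G k L c) (hE : IsBranching G k L c (k - l) δ E att)
    (hpar : ∀ j < k, ∀ v ∈ E j, att j v → G.Adj (c (j - 1 + e)) v)
    (hcase : (δ + e = 1 ∧ ∀ j < k, ∀ v ∈ E j, att j v → ∀ h ≤ k, G.Adj (c h) v → h = j - δ) ∨
      (δ = 0 ∧ e = 0 ∧ ∀ j v j' v', att j v → att j' v' → j < j' → j + l < j'))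
    (hne : (E k).Nonempty) : IsGood G k n (E k) := by
  obtain ⟨z, hz⟩ := hne
  have ht : 2 ≤ k - l := by
    obtain ⟨s, -, x, -, -, hs, -⟩ := hE.exists_upLeg le_rfl hz
    have := hE.bound _ _ hs
    omega
  have hδ : δ ≤ 1 := by rcases hcase with h | h <;> omega
  have he : e ≤ 1 := by rcases hcase with h | h <;> omega
  have hcE : ∀ j < k, ∀ v ∈ E j, e = 1 → ¬ G.Adj (c (j + 1)) v ∧ ∀ h, h + 2 ≤ j →
      ¬ G.Adj (c (h + 1)) v := by
    intro j hj v hv he1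
    rcases hcase with ⟨h1, h2⟩ | h1
    · by_cases ha : att j v
      · refine ⟨fun h => ?_, fun h hh hadj => ?_⟩
        · have := h2 j hj v hv ha _ (by omega) h
          omega
        · have := h2 j hj v hv ha _ (by omega) hadj
          omega
      · exact ⟨hE.clean j hj v hv ha _ (by omega),
          fun h hh => hE.clean j hj v hv ha _ (by omega)⟩
    · omega
  refine ⟨fun j => E j ∪ {v | j + 2 ≤ k - l ∧ v = c (j + e)}, ⟨?_, ?_, ?_⟩, ?_, fun v hv => Or.inl hv⟩
  · intro i j hi hj hij
    rw [Set.disjoint_left]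
    rintro v (h1 | ⟨h1, rfl⟩) (h2 | ⟨h2, h3⟩)
    · exact hij (hL.index_eq hi hj (hE.sub i hi h1) (hE.sub j hj h2))
    · subst h3
      have := hL.index_eq hi (by omega) (hE.sub i hi h1) (hc.mem (j + e) (by omega))
      exact hE.ne i (by omega) _ h1 (by rw [this])
    · have := hL.index_eq hj (by omega) (hE.sub j hj h2) (hc.mem (i + e) (by omega))
      exact hE.ne j (by omega) _ h2 (by rw [this])
    · have := hL.index_eq (by omega) (by omega) (hc.mem (i + e) (by omega))
        (h3 ▸ hc.mem (j + e) (by omega))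
      omega
  · refine ⟨c e, ?_⟩
    ext v
    simp [hE.zero, ht]
  · intro i hi hik v hv
    obtain ⟨i, rfl⟩ : ∃ j, i = j + 1 := ⟨i - 1, by omega⟩
    simp only [Nat.add_sub_cancel]
    refine ⟨?_, ?_⟩
    · rcases hv with hv | ⟨h1, rfl⟩
      · by_cases ha : att (i + 1) v
        · have hb := hE.bound _ _ ha
          exact ⟨c (i + e), Or.inr ⟨by omega, rfl⟩, by simpa using hpar _ (by omega) v hv ha⟩
        · obtain ⟨u, hu, huv⟩ := hE.par i (by omega) v hv ha
          exact ⟨u, Or.inl hu, huv⟩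
      · refine ⟨c (i + e), Or.inr ⟨by omega, rfl⟩, ?_⟩
        rw [show i + 1 + e = i + e + 1 by omega]
        exact hc.adj _ (by omega)
    · intro h hh u hu hadj
      rcases hv with hv | ⟨h1, rfl⟩ <;> rcases hu with hu | ⟨h2, rfl⟩
      · have := hL.le_succ hik (hE.sub h (by omega) hu) (hE.sub _ hik hv) hadj
        omega
      · have := hL.le_succ hik (hc.mem (h + e) (by omega)) (hE.sub _ hik hv) hadj
        obtain rfl : e = 1 := by omega
        exact (hcE (i + 1) (by omega) v hv rfl).2 h (by omega) hadj
      · have := hL.le_succ (by omega) (hE.sub h (by omega) hu) (hc.mem (i + 1 + e) (by omega)) hadj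
        omega
      · have := hL.le_succ (by omega) (hc.mem (h + e) (by omega))
          (hc.mem (i + 1 + e) (by omega)) hadj
        omega
  · refine SameParents.of_imp fun i hi u hu v hv huv w hw hwu => ?_
    rcases hu with hu | ⟨hu, rfl⟩ <;> rcases hv with hv | ⟨hv, rfl⟩
    · by_cases hua : att (i + 1) u
      · have hva := hE.att_of_adj hL hG hl hC hc hδ (by omega) hu hv huv hua
        rcases hw with hw | ⟨hw, rfl⟩
        · rcases hcase with ⟨h1, h2⟩ | ⟨rfl, rfl, h2⟩
          · exact hE.adj_of_att hL hG hl hC hc hδ h2 (by omega) hw hu hv huv hua hva hwu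
          · exact absurd hwu (hE.not_adj_of_att hL hG hc (by omega) h2 hw hu hua
              (by simpa using hpar _ (by omega) u hu hua))
        · simpa using hpar _ (by omega) v hv hva
      · have hva : ¬ att (i + 1) v := fun hva =>
          hua (hE.att_of_adj hL hG hl hC hc hδ (by omega) hv hu huv.symm hva)
        rcases hw with hw | ⟨hw, rfl⟩
        · exact hE.adj_of_not_att hL hG hl hC hc hδ (by omega) hw hu hv huv hua hva hwu
        · exact absurd hwu (hE.clean _ (by omega) u hu hua _ (by omega))
    · by_cases he1 : e = 1
      · subst he1
        exact absurd huv.symm (hcE _ (by omega) u hu rfl).1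
      · obtain rfl : e = 0 := by omega
        rcases hw with hw | ⟨hw, rfl⟩
        · have hua : att (i + 1) u := by
            by_contra hua
            exact hE.clean _ (by omega) u hu hua _ (by omega) huv.symm
          rcases hcase with ⟨h1, h2⟩ | ⟨rfl, -, h2⟩
          · have := h2 _ (by omega) u hu hua _ (by omega) huv.symm
            omega
          · exact absurd hwu (hE.not_adj_of_att hL hG hc (by omega) h2 hw hu hua
              (by simpa using hpar _ (by omega) u hu hua))
        · exact hc.adj i (by omega)
    · by_cases he1 : e = 1
      · subst he1
        exact absurd huv (hcE _ (by omega) v hv rfl).1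
      · obtain rfl : e = 0 := by omega
        have hva : att (i + 1) v := by
          by_contra hva
          exact hE.clean _ (by omega) v hv hva _ (by omega) huv
        rcases hw with hw | ⟨hw, rfl⟩
        · exact absurd (hc.dep i (by omega) w (hE.sub i (by omega) hw) hwu)
            (hE.ne i (by omega) w hw)
        · simpa using hpar _ (by omega) v hv hva
    · exact absurd huv G.irrefl

/-- Grow a sequence of sets level by level: the set of index `j + 1` consists of `B (j + 1)` and
the vertices of `C (j + 1)` with a neighbour in the set of index `j`. -/
def grow (G : SimpleGraph V) (B C : ℕ → Set V) : ℕ → Set V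
  | 0 => B 0
  | j + 1 => B (j + 1) ∪ {v ∈ C (j + 1) | ∃ u ∈ grow G B C j, G.Adj u v}

/-- The vertices below a spine vertex of level at least `t - 1`. -/
def spineGrow (G : SimpleGraph V) (L : ℕ → Set V) (c : ℕ → V) (t : ℕ) : ℕ → Set V :=
  grow G (fun j => {v | j < t ∧ v = c j}) (fun j => {v ∈ L j | t ≤ j})

/-- The vertices below a neighbour of `c h` in level `h` which is not adjacent to `c (h - 1)`;
the levels above are replaced by a shifted copy of the spine. -/
def nbrGrow (G : SimpleGraph V) (L : ℕ → Set V) (c : ℕ → V) (h : ℕ) : ℕ → Set V :=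
  grow G (fun j => {v | j < h ∧ v = c (j + 1) ∨
      j = h ∧ v ∈ L h ∧ G.Adj (c h) v ∧ ¬ G.Adj (c (h - 1)) v})
    (fun j => {v ∈ L j | h < j ∧ ¬ G.Adj (c h) v})

/-- The vertices below an attached vertex, reached by avoiding the neighbours of the spine. -/
def attGrow (G : SimpleGraph V) (k : ℕ) (L : ℕ → Set V) (c : ℕ → V) (att : ℕ → V → Prop) :
    ℕ → Set V :=
  grow G (fun j => {v ∈ L j | v ≠ c j ∧ att j v})
    (fun j => {v ∈ L j | j < k → v ≠ c j ∧ ¬ G.Adj (c j) v ∧ ¬ G.Adj (c (j - 1)) v})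

section Pieces

variable {G : SimpleGraph V} {k l n t : ℕ} {L : ℕ → Set V} {c : ℕ → V}

theorem IsSpine.spineGrow_subset (hc : IsSpine G k L c) (j : ℕ) (hj : j ≤ k) :
    spineGrow G L c t j ⊆ L j := by
  cases j with
  | zero =>
    rintro v ⟨-, rfl⟩
    exact hc.mem 0 hj
  | succ j =>
    rintro v (⟨-, rfl⟩ | ⟨hv, -⟩)
    · exact hc.mem _ hj
    · exact hv.1

theorem IsSpine.mem_spineGrow (hc : IsSpine G k L c) (ht : 1 ≤ t) {j : ℕ} (hj : j ≤ k) :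
    c j ∈ spineGrow G L c t j := by
  induction j with
  | zero => exact ⟨ht, rfl⟩
  | succ j ih =>
    by_cases h : j + 1 < t
    · exact Or.inl ⟨h, rfl⟩
    · exact Or.inr ⟨⟨hc.mem _ hj, not_lt.1 h⟩, c j, ih (by omega), hc.adj j hj⟩

theorem spineGrow_eq {j : ℕ} (hj : j < t) : ∀ v ∈ spineGrow G L c t j, v = c j := by
  cases j with
  | zero => exact fun v hv => hv.2
  | succ j =>
    rintro v (⟨-, rfl⟩ | ⟨⟨-, hv⟩, -⟩)
    · rfl
    · exact absurd hj hv.not_gt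

theorem IsSpine.isGood_spineGrow (hL : IsLevelling G k L) (hc : IsSpine G k L c) (ht : 1 ≤ t)
    (hn : n ≤ t) (hnk : n ≤ k) : IsGood G k n (spineGrow G L c t k) := by
  have hsub := hc.spineGrow_subset (t := t)
  refine ⟨spineGrow G L c t, ⟨?_, ?_, ?_⟩, ?_, subset_rfl⟩
  · exact fun i j hi hj hij => (hL.1 i j hi hj hij).mono (hsub i hi) (hsub j hj)
  · refine ⟨c 0, Set.eq_singleton_iff_unique_mem.2 ⟨hc.mem_spineGrow ht (Nat.zero_le _), ?_⟩⟩
    exact fun v hv => spineGrow_eq ht v hv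
  · intro i hi hik v hv
    refine ⟨?_, fun h hh u hu hadj => ?_⟩
    · obtain ⟨i, rfl⟩ : ∃ j, i = j + 1 := ⟨i - 1, by omega⟩
      rcases hv with ⟨-, rfl⟩ | ⟨-, hv⟩
      · exact ⟨c i, hc.mem_spineGrow ht (by omega), hc.adj i hik⟩
      · exact hv
    · have := hL.le_succ hik (hsub h (by omega) hu) (hsub i hik hv) hadj
      omega
  · refine SameParents.of_imp fun i hi u hu v hv huv w hw hwu => ?_
    obtain rfl := spineGrow_eq (by omega) w hw
    rcases hv with ⟨-, rfl⟩ | ⟨-, w, hw', hwv⟩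
    · exact hc.adj i (by omega)
    · rwa [spineGrow_eq (by omega) w hw'] at hwv

theorem mem_nbrGrow_of_lt {h j : ℕ} (hj : j < h) {v : V} :
    v ∈ nbrGrow G L c h j ↔ v = c (j + 1) := by
  cases j with
  | zero =>
    constructor
    · rintro (⟨-, rfl⟩ | ⟨h1, -⟩)
      · rfl
      · omega
    · rintro rfl
      exact Or.inl ⟨hj, rfl⟩
  | succ j =>
    constructor
    · rintro ((⟨-, rfl⟩ | ⟨h1, -⟩) | ⟨⟨-, h1, -⟩, -⟩)
      · rfl
      · omega
      · omega
    · rintro rfl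
      exact Or.inl (Or.inl ⟨hj, rfl⟩)

theorem mem_nbrGrow_self {h : ℕ} (hh : 1 ≤ h) {v : V} :
    v ∈ nbrGrow G L c h h ↔ v ∈ L h ∧ G.Adj (c h) v ∧ ¬ G.Adj (c (h - 1)) v := by
  obtain ⟨h, rfl⟩ : ∃ j, h = j + 1 := ⟨h - 1, by omega⟩
  constructor
  · rintro ((⟨h1, -⟩ | ⟨-, h1⟩) | ⟨⟨-, h1, -⟩, -⟩)
    · omega
    · exact h1
    · omega
  · exact fun h1 => Or.inl (Or.inr ⟨rfl, h1⟩)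

theorem mem_nbrGrow_succ {h j : ℕ} (hj : h ≤ j) {v : V} :
    v ∈ nbrGrow G L c h (j + 1) ↔
      v ∈ L (j + 1) ∧ ¬ G.Adj (c h) v ∧ ∃ u ∈ nbrGrow G L c h j, G.Adj u v := by
  constructor
  · rintro ((⟨h1, -⟩ | ⟨h1, -⟩) | ⟨⟨h1, -, h2⟩, h3⟩)
    · omega
    · omega
    · exact ⟨h1, h2, h3⟩
  · exact fun ⟨h1, h2, h3⟩ => Or.inr ⟨⟨h1, by omega, h2⟩, h3⟩

theorem nbrGrow_subset {h j : ℕ} (hh : 1 ≤ h) (hj : h ≤ j) : nbrGrow G L c h j ⊆ L j := by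
  rcases hj.eq_or_lt with rfl | hj
  · exact fun v hv => ((mem_nbrGrow_self hh).1 hv).1
  · obtain ⟨j, rfl⟩ : ∃ i, j = i + 1 := ⟨j - 1, by omega⟩
    exact fun v hv => ((mem_nbrGrow_succ (by omega)).1 hv).1

theorem IsSpine.isGood_nbrGrow (hL : IsLevelling G k L) (hc : IsSpine G k L c) {h : ℕ}
    (hh : 1 ≤ h) (hhk : h < k) (hn : n ≤ h) : IsGood G k n (nbrGrow G L c h k) := by
  refine ⟨nbrGrow G L c h, ⟨?_, ?_, ?_⟩, ?_, subset_rfl⟩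
  · have key : ∀ i j, i < j → j ≤ k → Disjoint (nbrGrow G L c h i) (nbrGrow G L c h j) := by
      intro i j hij hj
      rw [Set.disjoint_left]
      intro v hvi hvj
      by_cases hi : i < h
      · obtain rfl := (mem_nbrGrow_of_lt hi).1 hvi
        by_cases hjh : j < h
        · have := hL.index_eq (by omega) (by omega) (hc.mem (i + 1) (by omega))
            ((mem_nbrGrow_of_lt hjh).1 hvj ▸ hc.mem (j + 1) (by omega))
          omega
        · have := hL.index_eq (by omega) (by omega) (hc.mem (i + 1) (by omega))
            (nbrGrow_subset hh (by omega) hvj)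
          obtain rfl : j = h := by omega
          rw [this] at hvj
          exact G.irrefl ((mem_nbrGrow_self hh).1 hvj).2.1
      · have := hL.index_eq (by omega) (by omega) (nbrGrow_subset hh (by omega) hvi)
          (nbrGrow_subset hh (by omega) hvj)
        omega
    intro i j hi hj hij
    rcases lt_or_gt_of_ne hij with h1 | h1
    · exact key i j h1 hj
    · exact (key j i h1 hi).symm
  · exact ⟨c 1, Set.ext fun v => mem_nbrGrow_of_lt hh⟩
  · intro i hi hik v hv
    obtain ⟨i, rfl⟩ : ∃ j, i = j + 1 := ⟨i - 1, by omega⟩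
    simp only [Nat.add_sub_cancel]
    rcases lt_trichotomy (i + 1) h with hih | rfl | hih
    · obtain rfl := (mem_nbrGrow_of_lt hih).1 hv
      refine ⟨⟨c (i + 1), (mem_nbrGrow_of_lt (by omega)).2 rfl, hc.adj _ (by omega)⟩, ?_⟩
      intro j hj u hu hadj
      obtain rfl := (mem_nbrGrow_of_lt (by omega)).1 hu
      have := hL.le_succ (by omega) (hc.mem _ (by omega)) (hc.mem _ (by omega)) hadj
      omega
    · obtain ⟨h1, h2, h3⟩ := (mem_nbrGrow_self hh).1 hv
      refine ⟨⟨_, (mem_nbrGrow_of_lt (by omega)).2 rfl, h2⟩, ?_⟩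
      intro j hj u hu hadj
      obtain rfl := (mem_nbrGrow_of_lt (by omega)).1 hu
      have := hL.le_succ (by omega) (hc.mem _ (by omega)) h1 hadj
      rw [show j + 1 = i + 1 - 1 by omega] at hadj
      exact h3 hadj
    · obtain ⟨h1, h2, h3⟩ := (mem_nbrGrow_succ (by omega)).1 hv
      refine ⟨h3, ?_⟩
      intro j hj u hu hadj
      by_cases hjh : j < h
      · obtain rfl := (mem_nbrGrow_of_lt hjh).1 hu
        have := hL.le_succ (by omega) (hc.mem _ (by omega)) h1 hadj
        rw [show j + 1 = h by omega] at hadj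
        exact h2 hadj
      · have := hL.le_succ (by omega) (nbrGrow_subset hh (by omega) hu) h1 hadj
        omega
  · refine SameParents.of_imp fun i hi u hu v hv huv w hw hwu => ?_
    obtain rfl := (mem_nbrGrow_of_lt (by omega)).1 hw
    rcases (hi.trans hn).eq_or_lt with rfl | hih
    · exact ((mem_nbrGrow_self hh).1 hv).2.1
    · obtain rfl := (mem_nbrGrow_of_lt hih).1 hu
      obtain rfl := (mem_nbrGrow_of_lt hih).1 hv
      exact absurd huv G.irrefl

theorem attGrow_subset {att : ℕ → V → Prop} (j : ℕ) : attGrow G k L c att j ⊆ L j := by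
  cases j with
  | zero => exact fun v hv => hv.1
  | succ j =>
    rintro v (hv | hv)
    · exact hv.1
    · exact hv.1.1

theorem IsSpine.isGood_attGrow [Finite V] (hL : IsLevelling G k L) (hG : OddHolesLE G l)
    (hl : 1 ≤ l) (hn : n ≤ k - 2) (hC : (G.induce (L k)).Preconnected) (hc : IsSpine G k L c)
    {δ e : ℕ} {att : ℕ → V → Prop} (hbound : ∀ j v, att j v → 1 ≤ j ∧ j < k - l)
    (hhit : ∀ j v, att j v → G.Adj (c (j - δ)) v ∧ G.Adj (c (j - 1 + e)) v)
    (hcase : (δ + e = 1 ∧ ∀ j < k, ∀ v ∈ L j, v ≠ c j → att j v → ∀ h ≤ k,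
        G.Adj (c h) v → h = j - δ) ∨
      (δ = 0 ∧ e = 0 ∧ ∀ j v j' v', att j v → att j' v' → j < j' → j + l < j'))
    (hne : (attGrow G k L c att k).Nonempty) : IsGood G k n (attGrow G k L c att k) := by
  have hnec : ∀ j < k, ∀ v ∈ attGrow G k L c att j, v ≠ c j := by
    intro j hj v hv
    cases j with
    | zero => exact hv.2.1
    | succ j =>
      rcases hv with hv | hv
      · exact hv.2.1
      · exact (hv.1.2 hj).1
  obtain ⟨F, hF, hFk, hFp, hFd⟩ := exists_dependent_subsets G (k := k)
    (E := attGrow G k L c att) (att := att) (by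
      rintro j hj v (hv | hv) ha
      · exact absurd hv.2.2 ha
      · exact hv.2)
  have hE : IsBranching G k L c (k - l) δ F att := by
    refine ⟨fun j _ => (hF j).trans (attGrow_subset j), fun j hj v hv => hnec j hj v (hF j hv), ?_,
      hbound, hFp, ?_, fun j _ v _ ha => (hhit j v ha).1, ?_, hFd⟩
    · refine Set.eq_empty_of_forall_notMem fun v hv => ?_
      have := hbound _ _ (hF 0 hv).2.2
      omega
    · intro j hj v hv ha h hh hadj
      have hvL := attGrow_subset _ (hF j hv)
      have h1 := hL.le_succ hj.le (hc.mem h hh) hvL hadj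
      have h2 := hL.le_succ hh hvL (hc.mem h hh) hadj.symm
      by_cases h3 : h = j + 1
      · subst h3
        exact hnec j hj v (hF j hv) (hc.dep j hj v hvL hadj.symm)
      · cases j with
        | zero => exact ha (hF 0 hv).2.2
        | succ j =>
          rcases hF _ hv with h4 | h4
          · exact ha h4.2.2
          · by_cases h5 : h = j + 1
            · subst h5
              exact (h4.1.2 hj).2.1 hadj
            · obtain rfl : h = j := by omega
              exact (h4.1.2 hj).2.2 hadj
    · intro j hj v hv ha h hh hjh hadj
      have hvL := attGrow_subset _ (hF j hv)
      rcases hcase with ⟨-, h1⟩ | ⟨rfl, -, -⟩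
      · exact h1 j hj v hvL (hnec j hj v (hF j hv)) ha h hh hadj
      · have h2 := hL.le_succ hh hvL (hc.mem h hh) hadj.symm
        by_contra h3
        obtain rfl : h = j + 1 := by omega
        exact hnec j hj v (hF j hv) (hc.dep j hj v hvL hadj.symm)
  rw [← hFk] at hne ⊢
  refine hE.isGood hL hG hl hn hC hc (fun j _ v _ ha => (hhit j v ha).2) ?_ hne
  refine hcase.imp (fun h => ⟨h.1, fun j hj v hv => ?_⟩) id
  exact h.2 j hj v (attGrow_subset _ (hF j hv)) (hnec j hj v (hF j hv))

/-- The ways in which a vertex off the spine can be adjacent to the spine at levels below `t`. -/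
def attKind (G : SimpleGraph V) (c : ℕ → V) (t l : ℕ) : Bool ⊕ Fin (l + 1) → ℕ → V → Prop
  | .inl false, j, v => (1 ≤ j ∧ j < t) ∧ G.Adj (c (j - 1)) v ∧ ¬ G.Adj (c j) v
  | .inl true, j, v => (1 ≤ j ∧ j < t) ∧ ¬ G.Adj (c (j - 1)) v ∧ G.Adj (c j) v
  | .inr r, j, v => (1 ≤ j ∧ j < t) ∧ (G.Adj (c (j - 1)) v ∧ G.Adj (c j) v) ∧ j % (l + 1) = r

theorem exists_attKind {j : ℕ} {v : V} (hj : 1 ≤ j ∧ j < t)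
    (h : G.Adj (c (j - 1)) v ∨ G.Adj (c j) v) : ∃ θ, attKind G c t l θ j v := by
  by_cases h1 : G.Adj (c (j - 1)) v <;> by_cases h2 : G.Adj (c j) v
  · exact ⟨.inr ⟨j % (l + 1), Nat.mod_lt _ (Nat.succ_pos _)⟩, hj, ⟨h1, h2⟩, rfl⟩
  · exact ⟨.inl false, hj, h1, h2⟩
  · exact ⟨.inl true, hj, h1, h2⟩
  · exact absurd h (by simp [h1, h2])

theorem IsSpine.isGood_attKind [Finite V] (hL : IsLevelling G k L) (hG : OddHolesLE G l)
    (hl : 1 ≤ l) (hn : n ≤ k - 2) (hC : (G.induce (L k)).Preconnected) (hc : IsSpine G k L c)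
    (θ : Bool ⊕ Fin (l + 1)) (hne : (attGrow G k L c (attKind G c (k - l) l θ) k).Nonempty) :
    IsGood G k n (attGrow G k L c (attKind G c (k - l) l θ) k) := by
  have hnbr : ∀ j < k, ∀ v ∈ L j, v ≠ c j → ∀ h ≤ k, G.Adj (c h) v → h = j ∨ h + 1 = j := by
    intro j hj v hv hvc h hh hadj
    have h1 := hL.le_succ hj.le (hc.mem h hh) hv hadj
    have h2 := hL.le_succ hh hv (hc.mem h hh) hadj.symm
    have h3 : h ≠ j + 1 := by
      rintro rfl
      exact hvc (hc.dep j hj v hv hadj.symm)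
    omega
  match θ, hne with
  | .inl false, hne =>
    refine hc.isGood_attGrow hL hG hl hn hC (δ := 1) (e := 0) (fun j v h => h.1)
      (fun j v h => ⟨h.2.1, h.2.1⟩) (Or.inl ⟨rfl, ?_⟩) hne
    intro j hj v hv hvc ha h hh hadj
    rcases hnbr j hj v hv hvc h hh hadj with rfl | rfl
    · exact absurd hadj ha.2.2
    · rfl
  | .inl true, hne =>
    refine hc.isGood_attGrow hL hG hl hn hC (δ := 0) (e := 1) (fun j v h => h.1)
      (fun j v h => ⟨h.2.2, ?_⟩) (Or.inl ⟨rfl, ?_⟩) hne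
    · rw [Nat.sub_add_cancel h.1.1]
      exact h.2.2
    · intro j hj v hv hvc ha h hh hadj
      rcases hnbr j hj v hv hvc h hh hadj with rfl | rfl
      · rfl
      · exact absurd hadj ha.2.1
  | .inr r, hne =>
    refine hc.isGood_attGrow hL hG hl hn hC (δ := 0) (e := 0) (fun j v h => h.1)
      (fun j v h => ⟨h.2.1.2, h.2.1.1⟩) (Or.inr ⟨rfl, rfl, ?_⟩) hne
    intro j v j' v' h h' hlt
    have hmod : j ≡ j' [MOD l + 1] := h.2.2.trans h'.2.2.symm
    have := Nat.le_of_dvd (by omega) ((Nat.modEq_iff_dvd' hlt.le).1 hmod)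
    omega

theorem IsSpine.cover_lower (hL : IsLevelling G k L) (hc : IsSpine G k L c) (ht : 1 ≤ t)
    {j : ℕ} (hj : j < k) {v : V} (hv : v ∈ L j) :
    v = c j ∨ (t ≤ j ∧ v ∈ spineGrow G L c t j) ∨
      (∃ h, t ≤ h ∧ h ≤ j ∧ v ∈ nbrGrow G L c h j) ∨
      ∃ θ, v ∈ attGrow G k L c (attKind G c t l θ) j := by
  induction j generalizing v with
  | zero =>
    obtain ⟨x, hx⟩ := hL.2.1
    have h1 := hc.mem 0 (by omega)
    rw [hx] at hv h1
    exact Or.inl (hv.trans h1.symm)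
  | succ j ih =>
    by_cases hvc : v = c (j + 1)
    · exact Or.inl hvc
    refine Or.inr ?_
    by_cases h1 : G.Adj (c j) v
    · by_cases htj : t ≤ j + 1
      · exact Or.inl ⟨htj, Or.inr ⟨⟨hv, htj⟩, c j, hc.mem_spineGrow ht (by omega), h1⟩⟩
      · obtain ⟨θ, hθ⟩ := exists_attKind (G := G) (c := c) (t := t) (l := l) (j := j + 1)
          (by omega) (Or.inl h1)
        exact Or.inr (Or.inr ⟨θ, Or.inl ⟨hv, hvc, hθ⟩⟩)
    by_cases h2 : G.Adj (c (j + 1)) v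
    · by_cases htj : t ≤ j + 1
      · exact Or.inr (Or.inl ⟨j + 1, htj, le_rfl, (mem_nbrGrow_self (by omega)).2 ⟨hv, h2, h1⟩⟩)
      · obtain ⟨θ, hθ⟩ := exists_attKind (G := G) (c := c) (t := t) (l := l) (j := j + 1)
          (by omega) (Or.inr h2)
        exact Or.inr (Or.inr ⟨θ, Or.inl ⟨hv, hvc, hθ⟩⟩)
    obtain ⟨u, hu, huv⟩ := hL.exists_parent hj.le hv
    rcases ih (by omega) hu with rfl | ⟨htj, h3⟩ | ⟨h, hth, hhj, h3⟩ | ⟨θ, h3⟩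
    · exact absurd huv h1
    · exact Or.inl ⟨by omega, Or.inr ⟨⟨hv, by omega⟩, u, h3, huv⟩⟩
    · refine Or.inr (Or.inl ⟨h, hth, by omega, (mem_nbrGrow_succ hhj).2 ⟨hv, fun h4 => ?_, u, h3, huv⟩⟩)
      have := hL.le_succ hj.le (hc.mem h (by omega)) hv h4
      obtain rfl : h = j := by omega
      exact h1 h4
    · exact Or.inr (Or.inr ⟨θ, Or.inr ⟨⟨hv, fun _ => ⟨hvc, h2, h1⟩⟩, u, h3, huv⟩⟩)

theorem IsSpine.cover (hL : IsLevelling G k L) (hc : IsSpine G k L c) (ht : 1 ≤ t) (htk : t < k)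
    {v : V} (hv : v ∈ L k) :
    v ∈ spineGrow G L c t k ∨ (∃ h, t ≤ h ∧ h < k ∧ v ∈ nbrGrow G L c h k) ∨
      ∃ θ, v ∈ attGrow G k L c (attKind G c t l θ) k := by
  obtain ⟨j, rfl⟩ : ∃ j, k = j + 1 := ⟨k - 1, by omega⟩
  by_cases h1 : G.Adj (c j) v
  · exact Or.inl (Or.inr ⟨⟨hv, by omega⟩, c j, hc.mem_spineGrow ht (by omega), h1⟩)
  obtain ⟨u, hu, huv⟩ := hL.exists_parent le_rfl hv
  rcases hc.cover_lower hL ht (l := l) (Nat.lt_succ_self j) hu with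
    rfl | ⟨htj, h3⟩ | ⟨h, hth, hhj, h3⟩ | ⟨θ, h3⟩
  · exact absurd huv h1
  · exact Or.inl (Or.inr ⟨⟨hv, by omega⟩, u, h3, huv⟩)
  · refine Or.inr (Or.inl ⟨h, hth, by omega, (mem_nbrGrow_succ hhj).2 ⟨hv, fun h4 => ?_, u, h3, huv⟩⟩)
    have := hL.le_succ le_rfl (hc.mem h (by omega)) hv h4
    obtain rfl : h = j := by omega
    exact h1 h4
  · exact Or.inr (Or.inr ⟨θ, Or.inr ⟨⟨hv, fun h => absurd h (lt_irrefl _)⟩, u, h3, huv⟩⟩)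

end Pieces

theorem IsLevelling.of_subset {G : SimpleGraph V} {k : ℕ} {L M : ℕ → Set V}
    (hL : IsLevelling G k L) (hM : ∀ j ≤ k, M j ⊆ L j) (h0 : (M 0).Nonempty)
    (hpar : ∀ j < k, ∀ v ∈ M (j + 1), ∃ u ∈ M j, G.Adj u v) : IsLevelling G k M := by
  refine ⟨fun i j hi hj hij => (hL.1 i j hi hj hij).mono (hM i hi) (hM j hj), ?_, ?_⟩
  · obtain ⟨x, hx⟩ := hL.2.1
    have hsub := hM 0 (Nat.zero_le _)
    rw [hx] at hsub
    exact ⟨x, h0.subset_singleton_iff.1 hsub⟩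
  · intro i hi hik v hv
    refine ⟨?_, fun h hh u hu => (hL.2.2 i hi hik v (hM i hik hv)).2 h hh u (hM h (by omega) hu)⟩
    obtain ⟨i, rfl⟩ : ∃ j, i = j + 1 := ⟨i - 1, by omega⟩
    exact hpar i hik v hv

theorem IsLevelling.exists_spine [Finite V] {G : SimpleGraph V} {k : ℕ} {L : ℕ → Set V}
    (hL : IsLevelling G k L) (hne : (L k).Nonempty) :
    ∃ (M : ℕ → Set V) (c : ℕ → V), IsLevelling G k M ∧ M k = L k ∧ IsSpine G k M c := by
  obtain ⟨F, hF, hFk, hFp, hFd⟩ := exists_dependent_subsets G (k := k) (E := L)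
    (att := fun _ _ => False) (fun j hj v hv _ => hL.exists_parent hj hv)
  have hFne : ∀ j ≤ k, (F j).Nonempty := by
    intro j hj
    induction hj using Nat.decreasingInduction with
    | self => rwa [hFk]
    | of_succ j hj ih =>
      obtain ⟨v, hv⟩ := ih
      obtain ⟨u, hu, -⟩ := hFp j hj v hv id
      exact ⟨u, hu⟩
  have hspine : ∀ j ≤ k, ∃ c, IsSpine G j F c := by
    intro j hj
    induction j with
    | zero =>
      obtain ⟨x, hx⟩ := hFne 0 hj
      refine ⟨fun _ => x, fun j hj => ?_, fun j hj => by omega, fun j hj => by omega⟩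
      rwa [Nat.le_zero.1 hj]
    | succ j ih =>
      obtain ⟨c, hc⟩ := ih (by omega)
      obtain ⟨w, hw, -, hcw, hdep⟩ := hFd j hj (c j) (hc.mem j le_rfl)
      refine ⟨Function.update c (j + 1) w, fun i hi => ?_, fun i hi => ?_, fun i hi => ?_⟩
      · rcases hi.eq_or_lt with rfl | hi
        · simpa using hw
        · rw [Function.update_of_ne hi.ne]
          exact hc.mem i (by omega)
      · rw [Function.update_of_ne hi.ne]
        rcases (Nat.lt_succ_iff.1 hi).eq_or_lt with rfl | hi
        · simpa using hcw
        · rw [Function.update_of_ne (by omega)]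
          exact hc.adj i hi
      · rw [Function.update_of_ne hi.ne]
        rcases (Nat.lt_succ_iff.1 hi).eq_or_lt with rfl | hi
        · simpa using hdep
        · rw [Function.update_of_ne (by omega)]
          exact hc.dep i hi
  obtain ⟨c, hc⟩ := hspine k le_rfl
  exact ⟨F, c, hL.of_subset (fun j _ => hF j) (hFne 0 (Nat.zero_le _))
    (fun j hj v hv => hFp j hj v hv id), hFk, hc⟩

theorem IsLevelling.exists_good_cover [Finite V] {G : SimpleGraph V} {k l n : ℕ} {L : ℕ → Set V}
    (hL : IsLevelling G k L) (hG : OddHolesLE G l) (hl : 1 ≤ l) (hlk : l < k) (hn₁ : n ≤ k - l)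
    (hn₂ : n ≤ k - 2) (hC : (G.induce (L k)).Preconnected) (hne : (L k).Nonempty) :
    ∃ A : Unit ⊕ Fin l ⊕ Bool ⊕ Fin (l + 1) → Set V,
      (∀ ι, (A ι).Nonempty → IsGood G k n (A ι)) ∧ ∀ v ∈ L k, ∃ ι, v ∈ A ι := by
  obtain ⟨M, c, hM, hMk, hc⟩ := hL.exists_spine hne
  rw [← hMk] at hC ⊢
  refine ⟨Sum.elim (fun _ => spineGrow G M c (k - l) k) (Sum.elim
    (fun h => nbrGrow G M c (k - l + h) k)
    (fun θ => attGrow G k M c (attKind G c (k - l) l θ) k)), ?_, ?_⟩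
  · rintro (_ | h | θ) hA
    · exact hc.isGood_spineGrow hM (by omega) hn₁ (by omega)
    · exact hc.isGood_nbrGrow hM (by omega) (by omega) (by omega)
    · exact hc.isGood_attKind hM hG hl hn₂ hC θ hA
  · intro v hv
    rcases hc.cover hM (t := k - l) (l := l) (by omega) (by omega) hv with
      h | ⟨h, h1, h2, h3⟩ | ⟨θ, h⟩
    · exact ⟨Sum.inl (), h⟩
    · refine ⟨Sum.inr (Sum.inl ⟨h - (k - l), by omega⟩), ?_⟩
      simpa [Nat.add_sub_cancel' h1] using h3
    · exact ⟨Sum.inr (Sum.inr θ), h⟩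

theorem colorable_induce_of_cover {ι : Type*} [Fintype ι] {G : SimpleGraph V} {N : ℕ} {X : Set V}
    {A : ι → Set V} (hA : ∀ i, (G.induce (A i)).Colorable N) (hX : ∀ v ∈ X, ∃ i, v ∈ A i) :
    (G.induce X).Colorable (Fintype.card ι * N) := by
  choose f hf using fun v : X => hX v v.2
  have col := fun i => (hA i).some
  have := (Coloring.mk (G := G.induce X) (fun v => (f v, col (f v) ⟨v, hf v⟩)) (by
    intro u v huv he
    simp only [Prod.mk.injEq] at he
    obtain ⟨h1, h2⟩ := he
    have hv : (v : V) ∈ A (f u) := h1 ▸ hf v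
    have h3 : ∀ i (hi : (v : V) ∈ A i), f u = i → col i ⟨v, hi⟩ = col (f u) ⟨v, hv⟩ := by
      rintro _ _ rfl
      rfl
    rw [h3 _ (hf v) h1] at h2
    exact (col (f u)).valid (v := ⟨u, hf u⟩) (w := ⟨v, hv⟩) huv h2)).colorable
  simpa using this

theorem IsLevelling.preconnected_below {G : SimpleGraph V} {k : ℕ} {L : ℕ → Set V}
    (hL : IsLevelling G k L) {i : ℕ} (hi : i ≤ k) :
    (G.induce {v | ∃ j < i, v ∈ L j}).Preconnected := by
  obtain ⟨x, hx⟩ := hL.2.1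
  have hroot : ∀ j, ∀ hj : j < i, ∀ v, ∀ hv : v ∈ L j,
      (G.induce {v | ∃ j < i, v ∈ L j}).Reachable ⟨v, j, hj, hv⟩
        ⟨x, 0, by omega, by rw [hx]; rfl⟩ := by
    intro j
    induction j with
    | zero =>
      intro hj v hv
      rw [hx] at hv
      obtain rfl : v = x := hv
      exact Reachable.refl _
    | succ j ih =>
      intro hj v hv
      obtain ⟨u, hu, huv⟩ := hL.exists_parent (by omega) hv
      refine Reachable.trans (Adj.reachable ?_) (ih (by omega) u hu)
      exact huv.symm
  rintro ⟨u, j, hj, hu⟩ ⟨v, j', hj', hv⟩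
  exact (hroot j hj u hu).trans (hroot j' hj' v hv).symm

theorem IndPath.parity_of_no_horizontal {G : SimpleGraph V} {k i : ℕ} {L : ℕ → Set V}
    (hL : IsLevelling G k L) (hi : i ≤ k)
    (hind : ∀ j < i, ∀ x ∈ L j, ∀ y ∈ L j, ¬ G.Adj x y) {T : Set V} {p q : V} {m : ℕ}
    (hp : IndPath G T p q m) (hT : ∀ v ∈ T, ∃ j < i, v ∈ L j) {a b : ℕ} (ha : a < i) (hb : b < i)
    (hpa : p ∈ L a) (hqb : q ∈ L b) : (m + a + b) % 2 = 0 := by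
  induction hp generalizing a with
  | single v =>
    have := hL.index_eq (by omega) (by omega) hpa hqb
    omega
  | @cons S u v w n hS huv hu hadj ih =>
    obtain ⟨j, hj, hv⟩ := hT v (Or.inr hS.left_mem)
    have h1 := ih (fun z hz => hT z (Or.inr hz)) hj hv hqb
    have h2 := hL.le_succ (by omega) hpa hv huv
    have h3 := hL.le_succ (by omega) hv hpa huv.symm
    have h4 : j ≠ a := by
      rintro rfl
      exact hind j hj u hpa v hv huv
    omega

theorem IsLevelling.not_adj_of_bipartite {G : SimpleGraph V} {k : ℕ} {L : ℕ → Set V}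
    (hL : IsLevelling G k L) (hG : OddHolesLE G 0) {i : ℕ} (hi : i ≤ k) :
    ∀ x ∈ L i, ∀ y ∈ L i, ¬ G.Adj x y := by
  induction i using Nat.strong_induction_on with
  | _ i ih =>
    intro x hx y hy hxy
    obtain _ | i := i
    · obtain ⟨r, hr⟩ := hL.2.1
      rw [hr] at hx hy
      exact hxy.ne (hx.trans hy.symm)
    obtain ⟨a, ha, hax⟩ := hL.exists_parent hi hx
    obtain ⟨b, hb, hby⟩ := hL.exists_parent hi hy
    obtain ⟨T, hT, p, q, m, hp, hxp, hyq, hp', hq'⟩ :=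
      IndPath.exists_between (hL.preconnected_below hi)
        ⟨a, ⟨i, Nat.lt_succ_self i, ha⟩, hax.symm⟩ ⟨b, ⟨i, Nat.lt_succ_self i, hb⟩, hby.symm⟩
    have hmem : ∀ z ∈ T, ∀ w ∈ L (i + 1), G.Adj w z → z ∈ L i := by
      intro z hz w hw hwz
      obtain ⟨j, hj, hzj⟩ := hT hz
      have := hL.le_succ hi hzj hw hwz.symm
      rwa [show i = j by omega]
    have hpar := hp.parity_of_no_horizontal hL hi (fun j hj => ih j hj (by omega))
      (fun v hv => hT hv) (Nat.lt_succ_self i) (Nat.lt_succ_self i)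
      (hmem p hp.left_mem x hx hxp) (hmem q hp.right_mem y hy hyq)
    have hS : IndPath G {x, y} x y 1 :=
      IndPath.cons (IndPath.single y) hxy hxy.ne (fun z hz _ => hz)
    refine hG.not_odd hS hp le_rfl hxp.symm hyq.symm ?_ ?_ (by omega) (by rw [Nat.odd_iff]; omega)
    · intro z hz hzT
      obtain ⟨j, hj, hzj⟩ := hT hzT
      have hzi : z ∈ L (i + 1) := by
        rcases hz with rfl | rfl
        · exact hx
        · exact hy
      have := hL.index_eq (by omega) hi hzj hzi
      omega
    · rintro z (rfl | rfl) w hw hwz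
      · exact Or.inl ⟨rfl, hp' w hw hwz.symm⟩
      · exact Or.inr ⟨rfl, hq' w hw hwz.symm⟩

theorem IsLevelling.colorable_of_isGood [Finite V] {G : SimpleGraph V} {k l n N : ℕ}
    {L : ℕ → Set V} (hL : IsLevelling G k L) (hG : OddHolesLE G l) (hl : 1 ≤ l) (hlk : l < k)
    (hn₁ : n ≤ k - l) (hn₂ : n ≤ k - 2)
    (hN : ∀ A, IsGood G k n A → (G.induce A).Colorable N) :
    (G.induce (L k)).Colorable ((3 * l + 3) * N) := by
  rw [colorable_iff_forall_connectedComponent]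
  intro K
  let X : Set V := Subtype.val '' K.supp
  have hX : X ⊆ L k := by
    rintro _ ⟨v, -, rfl⟩
    exact v.2
  let f : K.toSimpleGraph →g G.induce X :=
    ⟨fun v => ⟨v.1, v.1, v.2, rfl⟩, fun {u v} huv => huv⟩
  have hf : Function.Surjective f := by
    rintro ⟨_, v, hv, rfl⟩
    exact ⟨⟨v, hv⟩, rfl⟩
  have hne : X.Nonempty := K.nonempty_supp.image _
  have hLX : IsLevelling G k (Function.update L k X) := by
    obtain ⟨r, hr⟩ := hL.2.1
    refine hL.of_subset (fun j _ => ?_) ?_ (fun j hj v hv => ?_)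
    · by_cases hj : j = k
      · subst hj
        simpa using hX
      · rw [Function.update_of_ne hj]
    · rw [Function.update_of_ne (by omega), hr]
      exact Set.singleton_nonempty r
    · rw [Function.update_of_ne hj.ne]
      refine hL.exists_parent hj ?_
      by_cases hjk : j + 1 = k
      · subst hjk
        exact hX (by simpa using hv)
      · rwa [Function.update_of_ne hjk] at hv
  have hconn : (G.induce X).Preconnected := K.connected_toSimpleGraph.preconnected.map f hf
  obtain ⟨A, hA, hcov⟩ := hLX.exists_good_cover hG hl hlk hn₁ hn₂ (by rwa [Function.update_self])
    (by simpa using hne)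
  rw [Function.update_self] at hcov
  have hcol : ∀ i, (G.induce (A i)).Colorable N := by
    intro i
    rcases (A i).eq_empty_or_nonempty with h | h
    · have : IsEmpty (A i) := Set.isEmpty_coe_sort.2 h
      exact Colorable.of_isEmpty _
    · exact hN _ (hA i h)
  have := colorable_induce_of_cover hcol hcov
  refine (this.of_hom f).mono (Nat.mul_le_mul_right N ?_)
  simp only [Fintype.card_sum, Fintype.card_unit, Fintype.card_fin, Fintype.card_bool]
  omega

theorem stmt8 [Fintype V] (G : SimpleGraph V) (l k : ℕ) (L : ℕ → Set V)
    (hhole : ∀ (v : V) (p : G.Walk v v), p.IsCycle → IsInducedWalk G p →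
       Odd p.length → p.length ≤ 2 * l + 1)
    (hlev : IsLevelling G k L) :
    ∃ M : ℕ → Set V, IsLevelling G k M ∧
      (G.induce (L k)).chromaticNumber ≤
        ((3 * l + 3 : ℕ) : ℕ∞) * (G.induce (M k)).chromaticNumber ∧
      ∀ i, 1 ≤ i → i ≤ k - max 2 l → ∀ u ∈ M i, ∀ v ∈ M i, G.Adj u v →
        ∀ w ∈ M (i - 1), (G.Adj w u ↔ G.Adj w v) := by
  have hle : ∀ X : Set V, (G.induce X).chromaticNumber ≤
      ((3 * l + 3 : ℕ) : ℕ∞) * (G.induce X).chromaticNumber := fun X =>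
    le_mul_of_one_le_left' (by exact_mod_cast (show 1 ≤ 3 * l + 3 by omega))
  rcases Nat.eq_zero_or_pos l with rfl | hl
  · exact ⟨L, hlev, hle _, fun i _ hi u hu v hv huv =>
      absurd huv (hlev.not_adj_of_bipartite hhole (by omega) u hu v hv)⟩
  by_cases hk : k ≤ max 2 l
  · exact ⟨L, hlev, hle _, fun i h1 h2 => by omega⟩
  obtain ⟨r, hr⟩ := hlev.2.1
  have htriv : IsGood G k (k - max 2 l) ∅ := by
    refine ⟨fun j => if j = 0 then L 0 else ∅, hlev.of_subset (fun j _ => ?_) ?_ ?_, ?_,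
      Set.empty_subset _⟩
    · split_ifs with h
      · rw [h]
      · exact Set.empty_subset _
    · simp [hr]
    · intro j _ v hv
      simp at hv
    · intro i hi _ u hu
      simp [show i ≠ 0 by omega] at hu
  obtain ⟨_, ⟨M, ⟨hM, hMs⟩, rfl⟩, hmax⟩ := Set.exists_max_image
    ((fun M : ℕ → Set V => M k) '' {M | IsLevelling G k M ∧ SameParents G (k - max 2 l) M})
    (fun X => (G.induce X).chromaticNumber) (Set.toFinite _)
    (by obtain ⟨M, h1, h2, -⟩ := htriv; exact ⟨_, M, ⟨h1, h2⟩, rfl⟩)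
  have := Fintype.ofFinite (M k)
  obtain ⟨N, hN⟩ := ENat.ne_top_iff_exists.1
    (chromaticNumber_ne_top_iff_exists.2 ⟨_, (G.induce (M k)).colorable_of_fintype⟩)
  refine ⟨M, hM, ?_, hMs⟩
  have hgood : ∀ A, IsGood G k (k - max 2 l) A → (G.induce A).Colorable N := by
    rintro A ⟨M', h1, h2, hA⟩
    have h3 := hmax _ ⟨M', ⟨h1, h2⟩, rfl⟩
    rw [← hN, chromaticNumber_le_iff_colorable] at h3
    exact h3.of_hom (G.induceHomOfLE hA).toHom
  have hcol := hlev.colorable_of_isGood hhole hl (by omega) (by omega) (by omega) hgood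
  rw [← hN]
  exact_mod_cast chromaticNumber_le_iff_colorable.2 hcol
end
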